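/- arXiv:1808.05321 — 6 statements merged into one kernel-verified Lean document; each statement's English description precedes it below -/
import Mathlib

section
/- Let n be a positive integer and let L be a subgroup of ℤ^n of index two, equipped with the restriction of the standard inner product of ℤ^n. Then there exists an integer k with 1 ≤ k ≤ n and a ℤ-linear bijection from L to D_k × ℤ^{n−k} that preserves the inner product, where D_k × ℤ^{n−k} carries the inner product restricted from ℤ^k × ℤ^{n−k} = ℤ^n. In fact one may take k = |S|, where S ⊆ {1,…,n} is the nonempty subset with L = {v ∈ ℤ^n : ∑_{i∈S} v_i even}. -/
/-!
Since `L` has index two, membership in `L` is additive modulo 2: `a + b ∈ L` exactly when `a` and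
`b` are both in `L` or both outside it. Hence `v ∈ L` is decided by the parities of the coordinates
`v i` for `i` in the set `S` of those `i` with `e_i ∉ L`, which gives
`L = {v | ∑ i ∈ S, v i even}` (`mem_iff_even_sum`). If `S` were empty, `L` would be all of `ℤⁿ`,
which has index one. Finally, any permutation of the coordinates carrying `S` to the first `|S|`
indices (`exists_perm_mem_iff`) preserves the inner product and maps `L` onto
`D_{|S|} × ℤ^{n - |S|}`.
-/

/-- The subgroup of `ℤⁿ` consisting of vectors whose coordinate sum over the
index set `S` is even. -/
def evenSumSubgroup (n : ℕ) (S : Finset (Fin n)) : AddSubgroup (Fin n → ℤ) where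
  carrier := {v | Even (∑ i ∈ S, v i)}
  add_mem' := by
    intro a b ha hb
    simp only [Set.mem_setOf_eq] at *
    simpa [Finset.sum_add_distrib] using ha.add hb
  zero_mem' := by simp
  neg_mem' := by
    intro a ha
    simp only [Set.mem_setOf_eq] at *
    simpa using ha.neg

theorem single_mem_iff {n : ℕ} {L : AddSubgroup (Fin n → ℤ)} (hL : L.index = 2)
    (i : Fin n) (c : ℤ) :
    Pi.single i c ∈ L ↔ (Pi.single i (1 : ℤ) ∈ L ∨ Even c) := by
  have heven : ∀ m : ℤ, Pi.single i (m + m) ∈ L := fun m => by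
    rw [Pi.single_add, AddSubgroup.add_mem_iff_of_index_two hL]
  rcases Int.even_or_odd' c with ⟨m, rfl | rfl⟩
  · simpa [two_mul] using heven m
  · have hodd : ¬ Even (2 * m + 1) := by simp
    rw [Pi.single_add, AddSubgroup.add_mem_iff_of_index_two hL, two_mul]
    simp only [heven m, true_iff]
    rw [← two_mul]
    simp

open Classical in
/-- An index-two subgroup of `ℤⁿ` is cut out by the parity of the sum over the coordinates whose
standard basis vector lies outside it. -/
theorem mem_iff_even_sum {n : ℕ} {L : AddSubgroup (Fin n → ℤ)} (hL : L.index = 2)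
    (v : Fin n → ℤ) :
    v ∈ L ↔ Even (∑ i ∈ Finset.univ.filter (fun i => Pi.single i (1 : ℤ) ∉ L), v i) := by
  have key : ∀ T : Finset (Fin n), (∑ i ∈ T, Pi.single i (v i)) ∈ L ↔
      Even (∑ i ∈ T, if Pi.single i (1 : ℤ) ∉ L then v i else 0) := by
    intro T
    induction T using Finset.induction_on with
    | empty => simp
    | insert a T ha ih =>
      rw [Finset.sum_insert ha, Finset.sum_insert ha,
        AddSubgroup.add_mem_iff_of_index_two hL, Int.even_add, ih, single_mem_iff hL]
      by_cases h : Pi.single a (1 : ℤ) ∈ L <;> simp [h]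
  have h := key Finset.univ
  rwa [Finset.univ_sum_single, ← Finset.sum_filter] at h

theorem exists_perm_mem_iff {n : ℕ} (S T : Finset (Fin n)) (h : S.card = T.card) :
    ∃ σ : Equiv.Perm (Fin n), ∀ i, σ i ∈ T ↔ i ∈ S := by
  have e : {i // i ∈ S} ≃ {i // i ∈ T} := Fintype.equivOfCardEq (by simpa using h)
  refine ⟨e.extendSubtype, fun i => ⟨fun hi => ?_, fun hi => e.extendSubtype_mem i hi⟩⟩
  by_contra hS
  exact e.extendSubtype_not_mem i hS hi

/-- An index-two subgroup `L ≤ ℤⁿ`, with the restricted standard inner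
product, is isometric to `D_k × ℤ^{n-k}` (realized inside `ℤⁿ` as the vectors whose sum
of the first `k` coordinates is even) for some `1 ≤ k ≤ n`; in fact one may take
`k = |S|` where `L = {v : ∑_{i ∈ S} v_i even}`. -/
theorem index_two_subgroup_isometric_Dk (n : ℕ) (hn : 0 < n)
    (L : AddSubgroup (Fin n → ℤ)) (hL : L.index = 2) :
    ∃ (k : ℕ) (S : Finset (Fin n)), 1 ≤ k ∧ k ≤ n ∧ S.Nonempty ∧ k = S.card ∧
      (∀ v : Fin n → ℤ, v ∈ L ↔ Even (∑ i ∈ S, v i)) ∧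
      ∃ e : L ≃+ evenSumSubgroup n (Finset.univ.filter fun i => (i : ℕ) < k),
        ∀ x y : L,
          (∑ i, (x : Fin n → ℤ) i * (y : Fin n → ℤ) i)
            = ∑ i, ((e x : Fin n → ℤ) i * (e y : Fin n → ℤ) i) := by
  classical
  set S : Finset (Fin n) := Finset.univ.filter (fun i => Pi.single i (1 : ℤ) ∉ L) with hS
  have hmem : ∀ v : Fin n → ℤ, v ∈ L ↔ Even (∑ i ∈ S, v i) := mem_iff_even_sum hL
  have hne : S.Nonempty := by
    rw [Finset.nonempty_iff_ne_empty]
    intro h0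
    have htop : L = ⊤ := by
      rw [eq_top_iff]
      intro v _
      rw [hmem, h0]
      simp
    rw [htop, AddSubgroup.index_top] at hL
    omega
  have hle : S.card ≤ n := by simpa using S.card_le_univ
  obtain ⟨σ, hσ⟩ := exists_perm_mem_iff S (Finset.univ.filter fun i => (i : ℕ) < S.card)
    (by simp [Fin.card_filter_val_lt, hle])
  have hsum : ∀ v : Fin n → ℤ,
      ∑ i ∈ Finset.univ.filter (fun i : Fin n => (i : ℕ) < S.card), v i = ∑ i ∈ S, v (σ i) :=
    fun v => (Finset.sum_equiv σ (fun i => (hσ i).symm) (fun _ _ => rfl)).symm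
  refine ⟨S.card, S, hne.card_pos, hle, hne, rfl, hmem, ?_⟩
  refine ⟨{
    toFun := fun x => ⟨fun i => (x : Fin n → ℤ) (σ.symm i), ?_⟩
    invFun := fun y => ⟨fun i => (y : Fin n → ℤ) (σ i), ?_⟩
    left_inv := fun x => by ext i; simp
    right_inv := fun y => by ext i; simp
    map_add' := fun x y => rfl }, ?_⟩
  · change Even (∑ i ∈ _, _)
    rw [hsum]
    simpa using (hmem _).1 x.2
  · rw [hmem, ← hsum]
    exact y.2
  · intro x y
    exact (Equiv.sum_comp σ.symm fun i => (x : Fin n → ℤ) i * (y : Fin n → ℤ) i).symm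
end

section
/- Let k ≥ 1 and let D_k ⊂ ℤ^k be the sublattice of vectors with even coordinate sum. The four vectors χ_1 = (1,1,…,1), χ_2 = (−1,1,…,1), χ_3 = (0,0,…,0), χ_4 = (2,0,…,0) are characteristic covectors for D_k representing the four pairwise distinct classes of Char(D_k)/2D_k, and each χ_i has minimal norm in its class χ_i + 2D_k; these minimal norms are k, k, 0, 4 respectively. Consequently, the d-invariant d([χ]) = min{(⟨χ',χ'⟩ − k)/4 : χ' ∈ χ + 2D_k} takes on exactly the values 0, 0, −k/4, 1 − k/4 on the four classes. -/
/-! Pairing `x ∈ Char(D_k)` with `2eᵢ` and `eᵢ - eⱼ` shows that the coordinates of `x` are integers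
of one common parity; conversely every such vector is characteristic, because `⟨v,v⟩ ≡ ∑ vᵢ ≡ 0 (mod 2)`
on `D_k` (`isCharDk_iff`). Subtracting `0` or `(1,…,1)` from `x` therefore leaves `2v` with `v ∈ ℤᵏ`,
and the parity of `∑ vᵢ` decides whether `x` is congruent to that vector or to its modification in
the first coordinate; this gives the four classes. They are distinct: the parity of the coordinates
separates two pairs, and within a pair the difference is twice a vector of odd coordinate sum.

A vector with odd coordinates has norm at least `k` (`card_le_norm_of_odd`), which settles the first
two classes. An element of the last class is `2w` with `∑ wᵢ` odd, so `⟨w,w⟩` is odd, hence at least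
`1`, and the norm is at least `4`. The d-invariants are an affine rescaling of these minimal norms
(`isLeast_dInvariant`).
-/

/-- `x ∈ ℚᵏ` is a characteristic covector for the lattice `D_k ⊂ ℤᵏ` of integer
vectors with even coordinate sum: `x` lies in the dual lattice `D_k*` and
`⟨x,v⟩ ≡ ⟨v,v⟩ (mod 2)` for all `v ∈ D_k`. -/
def isCharDk (k : ℕ) (x : Fin k → ℚ) : Prop :=
  (∀ v : Fin k → ℤ, Even (∑ i, v i) → ∃ m : ℤ, (∑ i, x i * (v i : ℚ)) = (m : ℚ)) ∧
  (∀ v : Fin k → ℤ, Even (∑ i, v i) →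
    ∃ m : ℤ, (∑ i, x i * (v i : ℚ)) - (∑ i, (v i : ℚ) * (v i : ℚ)) = 2 * (m : ℚ))

/-- Congruence modulo `2 D_k`. -/
def cong2Dk (k : ℕ) (x y : Fin k → ℚ) : Prop :=
  ∃ v : Fin k → ℤ, Even (∑ i, v i) ∧ ∀ i, x i - y i = 2 * (v i : ℚ)

/-- `⟨v,v⟩ ≡ ∑ vᵢ (mod 2)`, so `D_k` is an even lattice. -/
lemma even_norm_iff {k : ℕ} (v : Fin k → ℤ) : Even (∑ i, v i * v i) ↔ Even (∑ i, v i) := by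
  have h : Even (∑ i, v i * v i - ∑ i, v i) := by
    rw [← Finset.sum_sub_distrib]
    refine Finset.even_sum _ fun i _ => ?_
    have := Int.even_mul_pred_self (v i)
    rwa [mul_sub, mul_one] at this
  rw [Int.even_sub] at h
  exact h

/-- The characteristic covectors of `D_k` are the integer vectors whose coordinates all have the
same parity. -/
lemma isCharDk_iff {n : ℕ} (x : Fin (n + 1) → ℚ) :
    isCharDk (n + 1) x ↔ ∃ (c : ℤ) (v : Fin (n + 1) → ℤ), ∀ i, x i = c + 2 * (v i : ℚ) := by
  constructor
  · rintro ⟨-, h⟩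
    have hint : ∀ i, ∃ m : ℤ, x i = m := by
      intro i
      obtain ⟨m, hm⟩ := h (Pi.single i 2) (by simp)
      refine ⟨m + 2, ?_⟩
      simp [Pi.single_apply] at hm
      push_cast
      linarith
    have hpar : ∀ i, ∃ m : ℤ, x i - x 0 = 2 * m := by
      intro i
      obtain ⟨m, hm⟩ := h (Pi.single i 1 - Pi.single 0 1) (by simp [Finset.sum_sub_distrib])
      have hv := (even_norm_iff (Pi.single i 1 - Pi.single 0 1 : Fin (n + 1) → ℤ)).2
        (by simp [Finset.sum_sub_distrib])
      obtain ⟨r, hr⟩ := hv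
      have hr' : (∑ j, (((Pi.single i 1 - Pi.single 0 1 : Fin (n + 1) → ℤ) j : ℤ) : ℚ)
          * (((Pi.single i 1 - Pi.single 0 1 : Fin (n + 1) → ℤ) j : ℤ) : ℚ)) = r + r := by
        exact_mod_cast hr
      rw [hr'] at hm
      refine ⟨m + r, ?_⟩
      simp [Pi.single_apply, mul_sub, Finset.sum_sub_distrib] at hm
      push_cast
      linarith
    obtain ⟨c, hc⟩ := hint 0
    choose v hv using hpar
    exact ⟨c, v, fun i => by rw [← hc, ← hv]; ring⟩
  · rintro ⟨c, u, hx⟩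
    have key : ∀ v : Fin (n + 1) → ℤ, (∑ i, x i * (v i : ℚ)) =
        ((c * ∑ i, v i + 2 * ∑ i, u i * v i : ℤ) : ℚ) := by
      intro v
      push_cast
      rw [Finset.mul_sum, Finset.mul_sum, ← Finset.sum_add_distrib]
      exact Finset.sum_congr rfl fun i _ => by rw [hx]; ring
    refine ⟨fun v _ => ⟨_, key v⟩, fun v hv => ?_⟩
    obtain ⟨s, hs⟩ := (even_norm_iff v).2 hv
    obtain ⟨r, hr⟩ := hv
    refine ⟨c * r + ∑ i, u i * v i - s, ?_⟩
    have hs' : (∑ i, (v i : ℚ) * (v i : ℚ)) = s + s := by exact_mod_cast hs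
    rw [key v, hs', hr]
    push_cast
    ring

lemma cong2Dk_refl (k : ℕ) (x : Fin k → ℚ) : cong2Dk k x x :=
  ⟨fun _ => 0, by simp, by simp⟩

/-- A vector of `ℤᵏ` with odd coordinates has norm at least `k`. -/
lemma card_le_norm_of_odd {k : ℕ} (y : Fin k → ℚ) (h : ∀ i, ∃ m : ℤ, Odd m ∧ y i = m) :
    (k : ℚ) ≤ ∑ i, y i * y i := by
  have h1 : ∀ i, (1 : ℚ) ≤ y i * y i := by
    intro i
    obtain ⟨m, hm, hy⟩ := h i
    have hm0 : m ≠ 0 := by rintro rfl; simp at hm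
    have : 0 < m * m := mul_self_pos.2 hm0
    rw [hy]
    exact_mod_cast this
  calc (k : ℚ) = ∑ _i : Fin k, (1 : ℚ) := by simp
    _ ≤ _ := Finset.sum_le_sum fun i _ => h1 i

/-- The d-invariant of the class of a short covector `χ` of norm `N` is `(N - k) / 4`. -/
lemma isLeast_dInvariant {k : ℕ} {χ : Fin k → ℚ} {N : ℚ} (hN : ∑ i, χ i * χ i = N)
    (hmin : ∀ y, cong2Dk k y χ → (∑ i, χ i * χ i) ≤ ∑ i, y i * y i) :
    IsLeast {r : ℚ | ∃ y, cong2Dk k y χ ∧ r = ((∑ i, y i * y i) - k) / 4} ((N - k) / 4) := by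
  refine ⟨⟨χ, cong2Dk_refl k χ, by rw [hN]⟩, ?_⟩
  rintro r ⟨y, hy, rfl⟩
  have := hmin y hy
  rw [hN] at this
  linarith

/-- If `x - χ ∈ 2ℤᵏ`, then `x` is congruent modulo `2D_k` to `χ` or to any `χ'` that differs from
`χ` by `±2` in the first coordinate only: the parity of the coordinate sum of `(x - χ) / 2` decides
between the two. -/
lemma cong2Dk_or {n : ℕ} {x χ χ' : Fin (n + 1) → ℚ} (v : Fin (n + 1) → ℤ)
    (hv : ∀ i, x i - χ i = 2 * (v i : ℚ)) (e : ℤ) (he : Odd e)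
    (h0 : χ 0 - χ' 0 = 2 * e) (hs : ∀ i : Fin n, χ i.succ = χ' i.succ) :
    cong2Dk (n + 1) x χ ∨ cong2Dk (n + 1) x χ' := by
  by_cases hev : Even (∑ i, v i)
  · exact Or.inl ⟨v, hev, hv⟩
  · refine Or.inr ⟨v + Pi.single 0 e, ?_, ?_⟩
    · simp only [Pi.add_apply, Finset.sum_add_distrib, Finset.sum_pi_single', Finset.mem_univ,
        if_true]
      exact (Int.not_even_iff_odd.1 hev).add_odd (by simpa using he)
    · intro i
      have := hv i
      refine Fin.cases ?_ (fun j => ?_) i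
      · have := hv 0
        simp
        linarith
      · have := hv j.succ
        simp [← hs]
        linarith

/-- Two vectors that differ by twice an integer vector of odd coordinate sum are not congruent
modulo `2D_k`. -/
lemma not_cong2Dk_of_odd {k : ℕ} {x y : Fin k → ℚ} (w : Fin k → ℤ)
    (hw : ∀ i, x i - y i = 2 * (w i : ℚ)) (hodd : Odd (∑ i, w i)) : ¬ cong2Dk k x y := by
  rintro ⟨v, hv, h⟩
  have : v = w := by
    funext i
    have h1 := h i
    rw [hw i] at h1
    have h2 : (v i : ℚ) = w i := by linarith
    exact_mod_cast h2
  subst this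
  exact Int.not_even_iff_odd.2 hodd hv

/-- Vectors whose first coordinates differ by an odd integer are not congruent modulo `2D_k`. -/
lemma not_cong2Dk_of_coord {n : ℕ} {x y : Fin (n + 1) → ℚ} (m : ℤ) (hm : Odd m)
    (h : x 0 - y 0 = m) : ¬ cong2Dk (n + 1) x y := by
  rintro ⟨v, -, hv⟩
  have h1 := hv 0
  rw [h] at h1
  have h2 : m = 2 * v 0 := by exact_mod_cast h1
  exact Int.not_even_iff_odd.2 hm ⟨v 0, by omega⟩

/-- `χ₁ = (1,…,1)`, `χ₂ = (-1,1,…,1)`, `χ₃ = 0`, `χ₄ = (2,0,…,0)` are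
characteristic covectors of `D_k` representing the four pairwise distinct classes of
`Char(D_k)/2D_k`, each of minimal norm in its class, with norms `k, k, 0, 4`;
consequently the d-invariant takes the values `0, 0, -k/4, 1 - k/4` on the four
classes. -/
theorem char_Dk_classes (k : ℕ) (hk : 1 ≤ k)
    (χ₁ χ₂ χ₃ χ₄ : Fin k → ℚ)
    (h1 : χ₁ = fun _ => (1 : ℚ))
    (h2 : χ₂ = fun i : Fin k => if (i : ℕ) = 0 then (-1 : ℚ) else 1)
    (h3 : χ₃ = fun _ => (0 : ℚ))
    (h4 : χ₄ = fun i : Fin k => if (i : ℕ) = 0 then (2 : ℚ) else 0) :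
    (isCharDk k χ₁ ∧ isCharDk k χ₂ ∧ isCharDk k χ₃ ∧ isCharDk k χ₄) ∧
    (∀ x : Fin k → ℚ, isCharDk k x →
      cong2Dk k x χ₁ ∨ cong2Dk k x χ₂ ∨ cong2Dk k x χ₃ ∨ cong2Dk k x χ₄) ∧
    ((¬ cong2Dk k χ₁ χ₂) ∧ (¬ cong2Dk k χ₁ χ₃) ∧ (¬ cong2Dk k χ₁ χ₄) ∧
     (¬ cong2Dk k χ₂ χ₃) ∧ (¬ cong2Dk k χ₂ χ₄) ∧ (¬ cong2Dk k χ₃ χ₄)) ∧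
    ((∀ y, cong2Dk k y χ₁ → (∑ i, χ₁ i * χ₁ i) ≤ ∑ i, y i * y i) ∧
     (∀ y, cong2Dk k y χ₂ → (∑ i, χ₂ i * χ₂ i) ≤ ∑ i, y i * y i) ∧
     (∀ y, cong2Dk k y χ₃ → (∑ i, χ₃ i * χ₃ i) ≤ ∑ i, y i * y i) ∧
     (∀ y, cong2Dk k y χ₄ → (∑ i, χ₄ i * χ₄ i) ≤ ∑ i, y i * y i)) ∧
    ((∑ i, χ₁ i * χ₁ i) = (k : ℚ) ∧ (∑ i, χ₂ i * χ₂ i) = (k : ℚ) ∧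
     (∑ i, χ₃ i * χ₃ i) = 0 ∧ (∑ i, χ₄ i * χ₄ i) = 4) ∧
    (IsLeast {r : ℚ | ∃ y, cong2Dk k y χ₁ ∧ r = ((∑ i, y i * y i) - k) / 4} 0 ∧
     IsLeast {r : ℚ | ∃ y, cong2Dk k y χ₂ ∧ r = ((∑ i, y i * y i) - k) / 4} 0 ∧
     IsLeast {r : ℚ | ∃ y, cong2Dk k y χ₃ ∧ r = ((∑ i, y i * y i) - k) / 4}
       (-(k : ℚ) / 4) ∧
     IsLeast {r : ℚ | ∃ y, cong2Dk k y χ₄ ∧ r = ((∑ i, y i * y i) - k) / 4}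
       (1 - (k : ℚ) / 4)) := by
  obtain ⟨n, rfl⟩ : ∃ n, k = n + 1 := ⟨k - 1, by omega⟩
  have n1 : (∑ i, χ₁ i * χ₁ i) = ((n + 1 : ℕ) : ℚ) := by simp [h1]
  have n2 : (∑ i, χ₂ i * χ₂ i) = ((n + 1 : ℕ) : ℚ) := by
    simp [h2, Fin.sum_univ_succ, add_comm]
  have n3 : (∑ i, χ₃ i * χ₃ i) = 0 := by simp [h3]
  have n4 : (∑ i, χ₄ i * χ₄ i) = 4 := by
    simp [h4]
    norm_num
  have m1 : ∀ y, cong2Dk (n + 1) y χ₁ → (∑ i, χ₁ i * χ₁ i) ≤ ∑ i, y i * y i := by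
    rintro y ⟨v, -, hv⟩
    rw [n1]
    refine card_le_norm_of_odd y fun i => ⟨2 * v i + 1, odd_two_mul_add_one _, ?_⟩
    have := hv i
    simp only [h1] at this
    push_cast
    linarith
  have m2 : ∀ y, cong2Dk (n + 1) y χ₂ → (∑ i, χ₂ i * χ₂ i) ≤ ∑ i, y i * y i := by
    rintro y ⟨v, -, hv⟩
    rw [n2]
    refine card_le_norm_of_odd y fun i => ?_
    have := hv i
    simp only [h2] at this
    split_ifs at this
    · exact ⟨2 * v i - 1, ⟨v i - 1, by ring⟩, by push_cast; linarith⟩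
    · exact ⟨2 * v i + 1, ⟨v i, by ring⟩, by push_cast; linarith⟩
  have m3 : ∀ y, cong2Dk (n + 1) y χ₃ → (∑ i, χ₃ i * χ₃ i) ≤ ∑ i, y i * y i := by
    intro y _
    rw [n3]
    exact Finset.sum_nonneg fun i _ => mul_self_nonneg _
  have m4 : ∀ y, cong2Dk (n + 1) y χ₄ → (∑ i, χ₄ i * χ₄ i) ≤ ∑ i, y i * y i := by
    rintro y ⟨v, hev, hv⟩
    rw [n4]
    -- `y = 2w` with `w = v + e₁`, whose coordinate sum is odd
    obtain ⟨w, hw, hodd⟩ : ∃ w : Fin (n + 1) → ℤ, (∀ i, y i = 2 * (w i : ℚ)) ∧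
        Odd (∑ i, w i) := by
      refine ⟨v + Pi.single 0 1, fun i => ?_, ?_⟩
      · refine Fin.cases ?_ (fun j => ?_) i
        · have := hv 0
          simp [h4] at this
          simp
          linarith
        · have := hv j.succ
          simp [h4] at this
          simp
          linarith
      · simp only [Pi.add_apply, Finset.sum_add_distrib]
        exact hev.add_odd (by simp)
    have hne : (∑ i, w i * w i) ≠ 0 := by
      intro h0
      have : Even (∑ i, w i * w i) := by rw [h0]; simp
      exact Int.not_even_iff_odd.2 hodd ((even_norm_iff w).1 this)
    have hpos : 1 ≤ ∑ i, w i * w i := by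
      have : 0 ≤ ∑ i, w i * w i := Finset.sum_nonneg fun i _ => mul_self_nonneg _
      omega
    have hy : (∑ i, y i * y i) = 4 * ((∑ i, w i * w i : ℤ) : ℚ) := by
      push_cast
      rw [Finset.mul_sum]
      exact Finset.sum_congr rfl fun i _ => by rw [hw]; ring
    have : (1 : ℚ) ≤ ((∑ i, w i * w i : ℤ) : ℚ) := by exact_mod_cast hpos
    rw [hy]
    linarith
  refine ⟨⟨?_, ?_, ?_, ?_⟩, ?_, ⟨?_, ?_, ?_, ?_, ?_, ?_⟩, ⟨m1, m2, m3, m4⟩, ⟨n1, n2, n3, n4⟩,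
    ?_, ?_, ?_, ?_⟩
  · exact (isCharDk_iff _).2 ⟨1, 0, by simp [h1]⟩
  · refine (isCharDk_iff _).2 ⟨1, Pi.single 0 (-1), Fin.cases ?_ fun j => ?_⟩
    · simp [h2]
      norm_num
    · simp [h2]
  · exact (isCharDk_iff _).2 ⟨0, 0, by simp [h3]⟩
  · refine (isCharDk_iff _).2 ⟨0, Pi.single 0 1, Fin.cases ?_ fun j => ?_⟩
    · simp [h4]
    · simp [h4]
  · intro x hx
    obtain ⟨c, v, hv⟩ := (isCharDk_iff x).1 hx
    rcases Int.even_or_odd c with ⟨r, hr⟩ | ⟨r, hr⟩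
    · right; right
      refine cong2Dk_or (fun i => v i + r) (fun i => ?_) (-1) (by decide) ?_ fun j => ?_
      · rw [hv, hr, h3]
        push_cast
        ring
      · simp [h3, h4]
      · simp [h3, h4]
    · have : cong2Dk (n + 1) x χ₁ ∨ cong2Dk (n + 1) x χ₂ := by
        refine cong2Dk_or (fun i => v i + r) (fun i => ?_) 1 (by decide) ?_ fun j => ?_
        · rw [hv, hr, h1]
          push_cast
          ring
        · simp [h1, h2]
          norm_num
        · simp [h1, h2]
      tauto
  · refine not_cong2Dk_of_odd (Pi.single 0 1) (Fin.cases ?_ fun j => ?_) (by simp)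
    · simp [h1, h2]
      norm_num
    · simp [h1, h2]
  · exact not_cong2Dk_of_coord 1 (by decide) (by simp [h1, h3])
  · exact not_cong2Dk_of_coord (-1) (by decide) (by simp [h1, h4]; norm_num)
  · exact not_cong2Dk_of_coord (-1) (by decide) (by simp [h2, h3])
  · exact not_cong2Dk_of_coord (-3) (by decide) (by simp [h2, h4]; norm_num)
  · refine not_cong2Dk_of_odd (Pi.single 0 (-1)) (Fin.cases ?_ fun j => ?_) (by simp)
    · simp [h3, h4]
    · simp [h3, h4]
  · simpa using isLeast_dInvariant n1 m1
  · simpa using isLeast_dInvariant n2 m2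
  · have := isLeast_dInvariant n3 m3
    rwa [zero_sub] at this
  · have := isLeast_dInvariant n4 m4
    rwa [sub_div, div_self (by norm_num)] at this
end

section
/- Let N ≥ 1, let A ⊆ {0,1,…,N−1}, and for each i ∈ A let b_i ∈ {−1,1}. Set v = ∑_{i∈A} b_i e_i ∈ ℤ^N. If v = x + y with x, y ∈ ℤ^N and ⟨x,y⟩ ≥ 0, then there exists a subset B ⊆ A such that x = ∑_{i∈B} b_i e_i and y = ∑_{i∈A∖B} b_i e_i. -/
/-!
Each coordinate of `v` has absolute value at most one, and two integers whose sum lies in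
`{-1, 0, 1}` have nonpositive product. So every term of `⟨x, y⟩` is nonpositive, and
`⟨x, y⟩ ≥ 0` forces all of them to vanish: `x` and `y` have disjoint supports. Hence each
coordinate of `v` is carried entirely by `x` or entirely by `y`, and `B` is the support of `x`.
-/

theorem mul_nonpos_of_abs_add_le_one {a b : ℤ} (h : |a + b| ≤ 1) : a * b ≤ 0 := by
  obtain ⟨h1, h2⟩ := abs_le.mp h
  rcases lt_trichotomy a 0 with ha | rfl | ha
  · exact mul_nonpos_of_nonpos_of_nonneg ha.le (by omega)
  · simp
  · exact mul_nonpos_of_nonneg_of_nonpos ha.le (by omega)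

/-- if `v = ∑_{i ∈ A} b_i e_i` with each `b_i = ±1`, and `v = x + y`
with `⟨x,y⟩ ≥ 0`, then `x = ∑_{i ∈ B} b_i e_i` and `y = ∑_{i ∈ A∖B} b_i e_i` for
some `B ⊆ A`. -/
theorem decomposition_of_pm_one_vector (N : ℕ) (hN : 1 ≤ N)
    (A : Finset (Fin N)) (b : Fin N → ℤ)
    (hb : ∀ i ∈ A, b i = 1 ∨ b i = -1)
    (x y : Fin N → ℤ)
    (hxy : (fun j => if j ∈ A then b j else 0) = x + y)
    (hip : 0 ≤ ∑ i, x i * y i) :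
    ∃ B ⊆ A, x = (fun j => if j ∈ B then b j else 0) ∧
      y = (fun j => if j ∈ A \ B then b j else 0) := by
  have hsum : ∀ i, (if i ∈ A then b i else 0) = x i + y i := fun i => congrFun hxy i
  have hle : ∀ i ∈ Finset.univ, x i * y i ≤ 0 := by
    intro i _
    apply mul_nonpos_of_abs_add_le_one
    rw [← hsum i]
    split_ifs with hi
    · rcases hb i hi with h | h <;> simp [h]
    · simp
  have hzero : ∀ i, x i = 0 ∨ y i = 0 := fun i =>
    mul_eq_zero.mp ((Finset.sum_eq_zero_iff_of_nonpos hle).mp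
      (le_antisymm (Finset.sum_nonpos hle) hip) i (Finset.mem_univ i))
  refine ⟨A.filter (fun i => x i ≠ 0), Finset.filter_subset _ _, ?_, ?_⟩ <;>
  · funext i
    have h1 := hsum i
    have h2 := hzero i
    have h3 := hb i
    simp only [Finset.mem_sdiff, Finset.mem_filter]
    grind
end

section
/- Let s, t ≥ 0 be integers, and set q = 7 + 4s + 9t + 12st + 4s²t, p = 11 + 4s + 14t + 16st + 4s²t, and r = −(2s+3). Then r ≤ −3 is odd, (r² − 2r − 1)·q = r²·p − 1, p ≡ −2r + 5 (mod r² − 2r − 1), q < p < 2q, and gcd(p,q) = 1. -/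
/-! With `m = r² - 2r - 1 = 4s² + 16s + 14`, the parameters are `p = (4s + 11) + t m` and
`q = (4s + 7) + t r²`. Hence `m q = r² p - 1` reduces to the case `t = 0`, the congruence for `p`
is immediate since `4s + 11 = -2r + 5`, and coprimality is the Bézout relation `r² p - m q = 1`.
The inequalities hold because `p - q` and `2q - p` are polynomials in `s, t` with positive
coefficients. -/

/-- with `q = 7 + 4s + 9t + 12st + 4s²t`, `p = 11 + 4s + 14t + 16st + 4s²t`
and `r = −(2s+3)` for integers `s, t ≥ 0`: `r ≤ −3` is odd,
`(r² − 2r − 1)q = r²p − 1`, `p ≡ −2r + 5 (mod r² − 2r − 1)`, `q < p < 2q`, and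
`gcd(p,q) = 1`. -/
theorem realization_parameters_arithmetic (s t q p r : ℤ)
    (hs : 0 ≤ s) (ht : 0 ≤ t)
    (hq : q = 7 + 4 * s + 9 * t + 12 * s * t + 4 * s ^ 2 * t)
    (hp : p = 11 + 4 * s + 14 * t + 16 * s * t + 4 * s ^ 2 * t)
    (hr : r = -(2 * s + 3)) :
    r ≤ -3 ∧ Odd r ∧
    (r ^ 2 - 2 * r - 1) * q = r ^ 2 * p - 1 ∧
    Int.ModEq (r ^ 2 - 2 * r - 1) p (-2 * r + 5) ∧
    q < p ∧ p < 2 * q ∧ Int.gcd p q = 1 := by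
  have hst : 0 ≤ s * t := mul_nonneg hs ht
  have hsst : 0 ≤ s ^ 2 * t := mul_nonneg (sq_nonneg s) ht
  have key : (r ^ 2 - 2 * r - 1) * q = r ^ 2 * p - 1 := by
    subst hq hp hr
    ring
  refine ⟨by linarith, ⟨-s - 2, by rw [hr]; ring⟩, key, ?_, by linarith, by linarith, ?_⟩
  · -- `p = (-2r + 5) + t (r² - 2r - 1)`
    refine (Int.modEq_iff_dvd.mpr ⟨-t, ?_⟩)
    subst hp hr
    ring
  · -- the identity `key` is a Bézout relation between `p` and `q`
    exact Int.isCoprime_iff_gcd_eq_one.mp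
      ⟨r ^ 2, -(r ^ 2 - 2 * r - 1), by linear_combination -key⟩
end

section
/- Let n ≥ 2 and let σ = (σ_0, …, σ_{n+1}) ∈ ℤ^{n+2} be a changemaker vector. Let a > b > c > d be four indices in {0,…,n+1} such that whenever σ_i = σ_j with i ∈ {a,b,c,d} and j ∉ {a,b,c,d}, one has i > j. Let Λ be a linear lattice with vertex basis x_0,…,x_n and diagonal Gram entries a_0,…,a_n all ≥ 2, and suppose φ : σ^⊥ → Λ is an isometry of lattices such that for every v ∈ σ^⊥, the integer ⟨v, e_a + e_b + e_c + e_d⟩ is congruent mod 2 to the coefficient of x_0 in φ(v). Let 𝒯₁ ⊂ ℤ^{n+2} be the set of vectors χ with χ_i ∈ {0,1} for every i ∉ {a,b,c,d} and with (χ_d, χ_c, χ_b, χ_a) equal to one of (±1,0,0,1), (0,±1,0,1), (0,0,±1,1), (0,0,0,2), (0,0,0,0). Assume that σ_a = σ_b + σ_c + σ_d + θ for some θ ∈ {−1,1}, and that for every integer j with 0 ≤ j ≤ 2σ_a + ∑_{i∉{a,b,c,d}} σ_i there exists χ ∈ 𝒯₁ with ⟨χ,σ⟩ = j. Then there exist integers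 s, t ≥ 0 with n = s + t + 2 such that d = 0, c = 1, b = 2, a = s + 3, and σ = (1, 1, 1, 2^{[s]}, 2, (2s+3)^{[t]}); that is, σ_0 = σ_1 = σ_2 = 1, σ_i = 2 for 3 ≤ i ≤ s + 3, and σ_i = 2s + 3 for s + 4 ≤ i ≤ n + 1. -/
/-!
An element of a positive definite lattice is called irreducible if it is not a sum of two nonzero
elements with nonnegative pairing. In a linear lattice, an irreducible element with nonzero
`x_0`-coefficient is, up to sign, an initial segment `x_0 + ⋯ + x_j` (`LinIrr.eq_initSeg`), and
the pairing of two initial segments is at least the smaller of their norms minus one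
(`LinIrr.pairing`). Through the isometry, any two irreducible `v, w ∈ σ^⊥` having odd pairing with
`e_a + e_b + e_c + e_d` therefore satisfy `min(|v|², |w|²) ≤ |⟨v, w⟩| + 1` (`OddIrr.pairing`).
The lattice `Λ` has no vectors of norm one, so all `σ_i` are positive (`sigma_ne_zero`). Everything
after that uses only these two facts and the test-vector condition; they are collected in `Setup`.

Irreducible vectors come from relations: if `σ_k = ∑_{i ∈ S} σ_i` with `k ∉ S`, then
`∑_{i ∈ S} e_i - e_k` is irreducible (`oddIrr_relVec`). The test-vector condition writes every
integer below `σ_a - σ_b = σ_c + σ_d + θ` as a sum of entries outside `a, b, c, d`. Applied to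
`σ_d`, `σ_c` and `σ_d + θ`, it produces relations with incompatible pairings, unless `θ = -1` and
`σ_c = σ_d = 1` (`Setup.theta_eq`, `Setup.sigma_c`). A few explicit vectors of norm `3` and `4`
then give `σ_b = 1` (`Setup.sigma_b`), so `σ_a = 2`. All entries outside `a, b, c, d` are at least
`2`, so `d, c, b` are the first three indices and the entries between `b` and `a` equal `2`.

Let `s` be the number of indices between `b` and `a`, and `K = 2s + 3`. That every entry after `σ_a`
equals `K` is proved by strong induction (`Setup.sigma_tail`). If the `r` entries between `a` and
`j` are all `K`, the test-vector condition bounds `σ_j` by `(r + 1) K + 2`. The norm `3` vector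
`e_c + e_d - e_a` rules out the values of `σ_j` with residue `1, …, 2s + 2` modulo `K`, as well as
`(r + 1) K + 1` and `(r + 1) K + 2`. A larger multiple of `K` is excluded by the irreducible vector
`e_b + e_c + e_d + ∑_{b < i < a} e_i - e_l` attached to an earlier entry `σ_l = K`.
-/

/-- `σ ∈ ℤᴺ` is a changemaker vector: its entries are nonnegative and nondecreasing,
and every integer `0 ≤ k ≤ ∑ σᵢ` is a sum of a subset of the entries. -/
def IsChangemaker {N : ℕ} (σ : Fin N → ℤ) : Prop :=
  (∀ i, 0 ≤ σ i) ∧ (∀ i j : Fin N, i ≤ j → σ i ≤ σ j) ∧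
  (∀ k : ℤ, 0 ≤ k → k ≤ ∑ i, σ i → ∃ S : Finset (Fin N), k = ∑ i ∈ S, σ i)

/-- The orthogonal complement `σ^⊥ = {v ∈ ℤᴺ : ⟨v,σ⟩ = 0}` as an additive subgroup. -/
def sigmaPerp {N : ℕ} (σ : Fin N → ℤ) : AddSubgroup (Fin N → ℤ) where
  carrier := {v | ∑ i, v i * σ i = 0}
  add_mem' := by
    intro a b ha hb
    simp only [Set.mem_setOf_eq] at *
    simp [add_mul, Finset.sum_add_distrib, ha, hb]
  zero_mem' := by simp
  neg_mem' := by
    intro a ha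
    simp only [Set.mem_setOf_eq] at *
    simp [ha]
  
/-- The pairing of the linear lattice with vertex basis `x_0, …, x_{m-1}` and diagonal
Gram entries `aG`, in vertex-basis coordinates: `⟨xᵢ,xᵢ⟩ = aG i`, `⟨xᵢ,xⱼ⟩ = −1` if
`|i−j| = 1`, and `0` otherwise. -/
def linPair {m : ℕ} (aG : Fin m → ℤ) (x y : Fin m → ℤ) : ℤ :=
  ∑ i, ∑ j, x i * y j *
    (if i = j then aG i
     else if (i : ℕ) + 1 = (j : ℕ) ∨ (j : ℕ) + 1 = (i : ℕ) then -1 else 0)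

/-- Membership in the set `𝒯₁` of odd test vectors determined by the four indices
`a > b > c > d`: entries outside `{a,b,c,d}` lie in `{0,1}` and
`(χ_d, χ_c, χ_b, χ_a)` is one of `(±1,0,0,1)`, `(0,±1,0,1)`, `(0,0,±1,1)`,
`(0,0,0,2)`, `(0,0,0,0)`. -/
def memT1 {n : ℕ} (a b c d : Fin (n + 2)) (χ : Fin (n + 2) → ℤ) : Prop :=
  (∀ i, i ≠ a → i ≠ b → i ≠ c → i ≠ d → (χ i = 0 ∨ χ i = 1)) ∧
  (((χ d = 1 ∨ χ d = -1) ∧ χ c = 0 ∧ χ b = 0 ∧ χ a = 1) ∨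
   (χ d = 0 ∧ (χ c = 1 ∨ χ c = -1) ∧ χ b = 0 ∧ χ a = 1) ∨
   (χ d = 0 ∧ χ c = 0 ∧ (χ b = 1 ∨ χ b = -1) ∧ χ a = 1) ∨
   (χ d = 0 ∧ χ c = 0 ∧ χ b = 0 ∧ χ a = 2) ∨
   (χ d = 0 ∧ χ c = 0 ∧ χ b = 0 ∧ χ a = 0))

namespace ChangemakerLinear

open Finset Matrix

/-! ### Linear lattices -/

/-- The pairing of a linear lattice as a diagonal part minus the contributions of the edges. -/
lemma linPair_eq {n : ℕ} (aG : Fin (n + 1) → ℤ) (x y : Fin (n + 1) → ℤ) :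
    linPair aG x y = ∑ i, aG i * (x i * y i)
      - ∑ i : Fin n, (x i.castSucc * y i.succ + x i.succ * y i.castSucc) := by
  have h : linPair aG x y = ∑ i, ∑ j, ((if i = j then aG i * (x i * y j) else 0)
      + (if (i : ℕ) + 1 = (j : ℕ) then -(x i * y j) else 0)
      + (if (j : ℕ) + 1 = (i : ℕ) then -(x i * y j) else 0)) := by
    unfold linPair
    refine sum_congr rfl fun i _ => sum_congr rfl fun j _ => ?_
    by_cases hij : i = j
    · subst hij; simp; ring
    · rcases lt_trichotomy ((i : ℕ) + 1) j with h1 | h1 | h1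
      · have h2 : ¬ (j : ℕ) + 1 = i := by omega
        simp [hij, h1.ne, h2]
      · have h2 : ¬ (j : ℕ) + 1 = i := by omega
        simp [hij, h1, h2]
      · by_cases h2 : (j : ℕ) + 1 = i
        · simp [hij, h1.ne', h2]
        · simp [hij, h1.ne', h2]
  rw [h]
  simp only [sum_add_distrib]
  have e1 : ∑ i : Fin (n + 1), ∑ j : Fin (n + 1),
      (if (i : ℕ) + 1 = (j : ℕ) then -(x i * y j) else 0)
      = -∑ i : Fin n, x i.castSucc * y i.succ := by
    rw [Fin.sum_univ_castSucc, ← sum_neg_distrib]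
    have : ∑ j : Fin (n + 1), (if ((Fin.last n : Fin (n + 1)) : ℕ) + 1 = (j : ℕ)
        then -(x (Fin.last n) * y j) else 0) = 0 := by
      refine sum_eq_zero fun j _ => if_neg ?_
      have := j.2; simp; omega
    rw [this, add_zero]
    refine sum_congr rfl fun i _ => ?_
    rw [Fin.sum_univ_succ]
    simp [Fin.val_inj]
  have e2 : ∑ i : Fin (n + 1), ∑ j : Fin (n + 1),
      (if (j : ℕ) + 1 = (i : ℕ) then -(x i * y j) else 0)
      = -∑ i : Fin n, x i.succ * y i.castSucc := by
    rw [sum_comm, Fin.sum_univ_castSucc, ← sum_neg_distrib]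
    have : ∑ j : Fin (n + 1), (if ((Fin.last n : Fin (n + 1)) : ℕ) + 1 = (j : ℕ)
        then -(x j * y (Fin.last n)) else 0) = 0 := by
      refine sum_eq_zero fun j _ => if_neg ?_
      have := j.2; simp; omega
    rw [this, add_zero]
    refine sum_congr rfl fun i _ => ?_
    rw [Fin.sum_univ_succ]
    simp [Fin.val_inj]
  rw [e1, e2]
  simp
  ring

lemma linPair_add_right {n : ℕ} (aG x y z : Fin (n + 1) → ℤ) :
    linPair aG x (y + z) = linPair aG x y + linPair aG x z := by
  simp only [linPair, ← sum_add_distrib, Pi.add_apply]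
  exact sum_congr rfl fun i _ => sum_congr rfl fun j _ => by ring

lemma linPair_neg_left {n : ℕ} (aG x y : Fin (n + 1) → ℤ) :
    linPair aG (-x) y = -linPair aG x y := by
  simp only [linPair, ← sum_neg_distrib, Pi.neg_apply]
  exact sum_congr rfl fun i _ => sum_congr rfl fun j _ => by ring

lemma linPair_comm {n : ℕ} (aG x y : Fin (n + 1) → ℤ) :
    linPair aG x y = linPair aG y x := by
  rw [linPair_eq, linPair_eq]
  congr 1
  · exact sum_congr rfl fun i _ => by ring
  · exact sum_congr rfl fun i _ => by ring

lemma linPair_neg_right {n : ℕ} (aG x y : Fin (n + 1) → ℤ) :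
    linPair aG x (-y) = -linPair aG x y := by
  rw [linPair_comm, linPair_neg_left, linPair_comm]

/-- The walk `0, x 0, …, x n, 0` has total variation at least `2 |x k|`. -/
lemma two_abs_le_variation {n : ℕ} (x : Fin (n + 1) → ℤ) (k : Fin (n + 1)) :
    2 * |x k| ≤ |x 0| + |x (Fin.last n)| + ∑ i : Fin n, |x i.castSucc - x i.succ| := by
  induction n with
  | zero =>
    have : k = 0 := by omega
    subst this
    simp; linarith
  | succ n ih =>
    have h1 := fun k => ih (fun i => x i.succ) k
    rw [Fin.sum_univ_succ]
    simp only [Fin.succ_last, Fin.castSucc_zero, ← Fin.succ_castSucc] at h1 ⊢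
    refine Fin.cases ?_ (fun k => ?_) k
    · have h2 := h1 0
      have h3 := abs_sub_abs_le_abs_sub (x 0) (x (Fin.succ 0))
      linarith
    · have h2 := h1 k
      have h3 := abs_sub_abs_le_abs_sub (x (Fin.succ 0)) (x 0)
      rw [abs_sub_comm] at h3
      linarith

/-- A linear lattice has no vector of norm one. -/
lemma two_le_linPair_self {n : ℕ} {aG : Fin (n + 1) → ℤ} (haG : ∀ i, 2 ≤ aG i)
    {x : Fin (n + 1) → ℤ} (hx : x ≠ 0) : 2 ≤ linPair aG x x := by
  obtain ⟨k, hk⟩ := Function.ne_iff.mp hx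
  have hk1 : 1 ≤ |x k| := Int.one_le_abs hk
  have h1 := two_abs_le_variation x k
  have habs : ∀ z : ℤ, |z| ≤ z * z := fun z => by
    rw [← abs_mul_abs_self z]
    rcases (abs_nonneg z).eq_or_lt with h | h
    · rw [← h]; simp
    · nlinarith
  have h2 : ∑ i : Fin n, |x i.castSucc - x i.succ|
      ≤ ∑ i : Fin n, (x i.castSucc - x i.succ) * (x i.castSucc - x i.succ) :=
    sum_le_sum fun i _ => habs _
  have h3 : ∑ i, 2 * (x i * x i) ≤ ∑ i, aG i * (x i * x i) :=
    sum_le_sum fun i _ => mul_le_mul_of_nonneg_right (haG i) (mul_self_nonneg _)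
  have h4 : ∑ i : Fin (n + 1), 2 * (x i * x i)
      = x 0 * x 0 + x (Fin.last n) * x (Fin.last n)
        + ∑ i : Fin n, (x i.castSucc * x i.castSucc + x i.succ * x i.succ) := by
    rw [← mul_sum, sum_add_distrib, two_mul]
    nth_rw 1 [Fin.sum_univ_succ]
    rw [Fin.sum_univ_castSucc]
    ring
  have h5 : ∑ i : Fin n, (x i.castSucc * x i.castSucc + x i.succ * x i.succ)
      - ∑ i : Fin n, (x i.castSucc * x i.succ + x i.succ * x i.castSucc)
      = ∑ i : Fin n, (x i.castSucc - x i.succ) * (x i.castSucc - x i.succ) := by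
    rw [← sum_sub_distrib]
    exact sum_congr rfl fun i _ => by ring
  rw [linPair_eq]
  have := habs (x 0)
  have := habs (x (Fin.last n))
  linarith

/-- The sum `x_0 + ⋯ + x_j` of the first vertices. -/
def initSeg {n : ℕ} (j : Fin (n + 1)) : Fin (n + 1) → ℤ := fun i => if i ≤ j then 1 else 0

/-- `x_0 + ⋯ + x_j` pairs nonnegatively with any element that is nonnegative on
`x_0, …, x_j` and has no `x_{j+1}`-component. -/
lemma linPair_initSeg_nonneg {n : ℕ} {aG : Fin (n + 1) → ℤ} (haG : ∀ i, 2 ≤ aG i)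
    (j : Fin (n + 1)) (w : Fin (n + 1) → ℤ) (h1 : ∀ i ≤ j, 0 ≤ w i)
    (h2 : ∀ i : Fin (n + 1), (i : ℕ) = j + 1 → w i = 0) :
    0 ≤ linPair aG (initSeg j) w := by
  have hp : ∀ i, 0 ≤ initSeg j i * w i := fun i => by
    unfold initSeg; split_ifs with h
    · simpa using h1 i h
    · simp
  have a1 : ∑ i, 2 * (initSeg j i * w i) ≤ ∑ i, aG i * (initSeg j i * w i) :=
    sum_le_sum fun i _ => mul_le_mul_of_nonneg_right (haG i) (hp i)
  have a2 : ∑ i : Fin n, (initSeg j i.castSucc * w i.succ + initSeg j i.succ * w i.castSucc)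
      ≤ ∑ i : Fin n, (initSeg j i.succ * w i.succ + initSeg j i.castSucc * w i.castSucc) := by
    refine sum_le_sum fun i _ => add_le_add ?_ ?_
    · unfold initSeg
      by_cases h : i.succ ≤ j
      · rw [if_pos h, if_pos (le_trans (Fin.castSucc_lt_succ).le h)]
      · by_cases h' : i.castSucc ≤ j
        · have : w i.succ = 0 := h2 _ (by
            rw [Fin.le_def] at h h'; simp at h h' ⊢; omega)
          simp [this]
        · simp [h, h']
    · by_cases h' : i.succ ≤ j
      · have : i.castSucc ≤ j := le_trans (Fin.castSucc_lt_succ).le h'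
        simp [initSeg, this, h']
      · have := hp i.castSucc
        simpa [initSeg, h'] using this
  have a3 : ∑ i, 2 * (initSeg j i * w i) = initSeg j 0 * w 0
      + initSeg j (Fin.last n) * w (Fin.last n)
      + ∑ i : Fin n, (initSeg j i.succ * w i.succ + initSeg j i.castSucc * w i.castSucc) := by
    rw [← mul_sum, sum_add_distrib, two_mul]
    nth_rw 1 [Fin.sum_univ_succ]
    rw [Fin.sum_univ_castSucc]
    ring
  rw [linPair_eq]
  have := hp 0
  have := hp (Fin.last n)
  linarith

/-- Irreducibility: no decomposition into two nonzero summands with nonnegative pairing. -/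
def LinIrr {n : ℕ} (aG x : Fin (n + 1) → ℤ) : Prop :=
  ∀ y z, y + z = x → 0 ≤ linPair aG y z → y = 0 ∨ z = 0

/-- The positive and negative parts of an element pair nonpositively, so an irreducible
element has coefficients of one sign. -/
lemma LinIrr.sign {n : ℕ} {aG x : Fin (n + 1) → ℤ} (h : LinIrr aG x) :
    (∀ i, 0 ≤ x i) ∨ ∀ i, x i ≤ 0 := by
  rcases h (fun i => max (x i) 0) (fun i => min (x i) 0) (by
      funext i; simp [max_add_min]) (by
      rw [linPair_eq]
      have h1 : ∑ i, aG i * (max (x i) 0 * min (x i) 0) = 0 :=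
        sum_eq_zero fun i _ => by simp
      have h2 : ∑ i : Fin n, (max (x i.castSucc) 0 * min (x i.succ) 0
          + max (x i.succ) 0 * min (x i.castSucc) 0) ≤ 0 :=
        sum_nonpos fun i _ => add_nonpos
          (mul_nonpos_of_nonneg_of_nonpos (le_max_right _ _) (min_le_right _ _))
          (mul_nonpos_of_nonneg_of_nonpos (le_max_right _ _) (min_le_right _ _))
      linarith) with h | h
  · right; intro i; have := congrFun h i; simpa using this
  · left; intro i; have := congrFun h i; simpa using this

lemma LinIrr.neg {n : ℕ} {aG x : Fin (n + 1) → ℤ} (h : LinIrr aG x) : LinIrr aG (-x) := by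
  intro y z hyz h0
  rcases h (-y) (-z) (by rw [← neg_add, hyz, neg_neg])
    (by rwa [linPair_neg_left, linPair_neg_right, neg_neg]) with h | h
  · left; simpa using h
  · right; simpa using h

/-- If all coefficients are nonnegative and `x 0 > 0`, split off the maximal initial segment
contained in the support. -/
lemma LinIrr.eq_initSeg_of_nonneg {n : ℕ} {aG x : Fin (n + 1) → ℤ} (haG : ∀ i, 2 ≤ aG i)
    (h : LinIrr aG x) (hx : ∀ i, 0 ≤ x i) (h0 : x 0 ≠ 0) : ∃ j, x = initSeg j := by
  classical
  obtain ⟨j, hj, hmax⟩ : ∃ j, (∀ i ≤ j, x i ≠ 0) ∧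
      ∀ k, (∀ i ≤ k, x i ≠ 0) → k ≤ j := by
    have hne : (univ.filter fun j => ∀ i ≤ j, x i ≠ 0).Nonempty :=
      ⟨0, by simp only [mem_filter, mem_univ, true_and]
             intro i hi; rw [Fin.le_zero_iff.mp hi]; exact h0⟩
    refine ⟨_, (mem_filter.mp (max'_mem _ hne)).2, fun k hk => le_max' _ _ (by simpa using hk)⟩
  refine ⟨j, ?_⟩
  have hseg : initSeg j ≠ 0 := fun hh => by
    have := congrFun hh 0
    simp [initSeg] at this
  rcases h (initSeg j) (x - initSeg j) (by abel) (linPair_initSeg_nonneg haG _ _ (by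
      intro i hi
      have := lt_of_le_of_ne (hx i) (hj i hi).symm
      simp [initSeg, hi]; omega) (by
      intro i hi
      have hij : ¬ i ≤ j := by rw [Fin.le_def]; omega
      have : x i = 0 := by
        by_contra hne
        refine hij (hmax i fun k hk => ?_)
        rcases hk.eq_or_lt with rfl | hk
        · exact hne
        · exact hj k (by rw [Fin.le_def]; rw [Fin.lt_def] at hk; omega)
      simp [initSeg, hij, this])) with hh | hh
  · exact absurd hh hseg
  · exact sub_eq_zero.mp hh

lemma LinIrr.eq_initSeg {n : ℕ} {aG x : Fin (n + 1) → ℤ} (haG : ∀ i, 2 ≤ aG i)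
    (h : LinIrr aG x) (h0 : x 0 ≠ 0) : ∃ j, x = initSeg j ∨ x = -initSeg j := by
  rcases h.sign with hx | hx
  · obtain ⟨j, hj⟩ := h.eq_initSeg_of_nonneg haG hx h0
    exact ⟨j, Or.inl hj⟩
  · obtain ⟨j, hj⟩ := h.neg.eq_initSeg_of_nonneg haG (fun i => by simpa using hx i)
      (by simpa using h0)
    exact ⟨j, Or.inr (by rw [← hj, neg_neg])⟩

/-- For `i < j` the segments overlap in `x_0 + ⋯ + x_i`, and the only other contribution to
their pairing is the edge from `x_i` to `x_{i+1}`. -/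
lemma linPair_initSeg {n : ℕ} (aG : Fin (n + 1) → ℤ) {i j : Fin (n + 1)} (hij : i ≤ j) :
    linPair aG (initSeg i) (initSeg i) ≤ linPair aG (initSeg i) (initSeg j) + 1 := by
  have h : linPair aG (initSeg i) (initSeg j)
      = linPair aG (initSeg i) (initSeg i + (initSeg j - initSeg i)) := by
    congr 1; abel
  have key : -1 ≤ linPair aG (initSeg i) (initSeg j - initSeg i) := by
    rw [linPair_eq]
    have h1 : ∑ k, aG k * (initSeg i k * (initSeg j - initSeg i) k) = 0 :=
      sum_eq_zero fun k _ => by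
        by_cases hk : k ≤ i
        · simp [initSeg, hk, hk.trans hij]
        · simp [initSeg, hk]
    have h2 : ∑ k : Fin n, (initSeg i k.castSucc * (initSeg j - initSeg i) k.succ
        + initSeg i k.succ * (initSeg j - initSeg i) k.castSucc)
        ≤ ∑ k : Fin n, if (k : ℕ) = i then 1 else 0 := by
      refine sum_le_sum fun k _ => ?_
      simp only [initSeg, Pi.sub_apply, Fin.le_def, Fin.val_castSucc, Fin.val_succ]
      rw [Fin.le_def] at hij
      split_ifs <;> omega
    have h3 : ∑ k : Fin n, (if (k : ℕ) = i then (1 : ℤ) else 0) ≤ 1 := by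
      rw [sum_boole]
      have : (univ.filter fun k : Fin n => (k : ℕ) = i).card ≤ 1 :=
        card_le_one.mpr fun p hp q hq => by
          simp only [mem_filter] at hp hq
          exact Fin.ext (hp.2.trans hq.2.symm)
      exact_mod_cast this
    linarith
  rw [h, linPair_add_right]
  linarith

/-- Two irreducible elements whose `x_0`-coefficients are nonzero are initial segments up to
sign, so their pairing is at least the smaller of their norms minus one. -/
lemma LinIrr.pairing {n : ℕ} {aG x y : Fin (n + 1) → ℤ} (haG : ∀ i, 2 ≤ aG i)
    (hx : LinIrr aG x) (hy : LinIrr aG y) (hx0 : x 0 ≠ 0) (hy0 : y 0 ≠ 0) :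
    linPair aG x x ≤ |linPair aG x y| + 1 ∨ linPair aG y y ≤ |linPair aG x y| + 1 := by
  obtain ⟨i, hi⟩ := hx.eq_initSeg haG hx0
  obtain ⟨j, hj⟩ := hy.eq_initSeg haG hy0
  have e1 : linPair aG x x = linPair aG (initSeg i) (initSeg i) := by
    rcases hi with rfl | rfl <;> simp [linPair_neg_left, linPair_neg_right]
  have e2 : linPair aG y y = linPair aG (initSeg j) (initSeg j) := by
    rcases hj with rfl | rfl <;> simp [linPair_neg_left, linPair_neg_right]
  have e3 : |linPair aG x y| = |linPair aG (initSeg i) (initSeg j)| := by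
    rcases hi with rfl | rfl <;> rcases hj with rfl | rfl <;>
      simp [linPair_neg_left, linPair_neg_right]
  rw [e1, e2, e3]
  rcases le_total i j with h | h
  · left
    have := linPair_initSeg aG h
    have := le_abs_self (linPair aG (initSeg i) (initSeg j))
    linarith
  · right
    have := linPair_initSeg aG h
    rw [linPair_comm aG (initSeg i)]
    have := le_abs_self (linPair aG (initSeg j) (initSeg i))
    linarith

/-! ### Odd irreducible vectors in `σ^⊥` -/

/-- `v` is an irreducible element of `σ^⊥` (no decomposition into two nonzero elements of `σ^⊥`
with nonnegative pairing) and `⟨v, e_a + e_b + e_c + e_d⟩` is odd. -/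
structure OddIrr {N : ℕ} (σ : Fin N → ℤ) (a b c d : Fin N) (v : Fin N → ℤ) : Prop where
  perp : v ⬝ᵥ σ = 0
  odd : Odd (v a + v b + v c + v d)
  irr : ∀ x y : Fin N → ℤ, x ⬝ᵥ σ = 0 → y ⬝ᵥ σ = 0 → x + y = v → 0 ≤ x ⬝ᵥ y → x = 0 ∨ y = 0

/-- Under the isometry, odd irreducible vectors become irreducible elements with nonzero
`x_0`-coefficient, so `LinIrr.pairing` applies to them. -/
lemma OddIrr.pairing {n : ℕ} {σ : Fin (n + 2) → ℤ} {a b c d : Fin (n + 2)}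
    {aG : Fin (n + 1) → ℤ} (haG : ∀ i, 2 ≤ aG i)
    (e : sigmaPerp σ ≃+ (Fin (n + 1) → ℤ))
    (hiso : ∀ v w : sigmaPerp σ,
      (∑ i, (v : Fin (n + 2) → ℤ) i * (w : Fin (n + 2) → ℤ) i)
        = linPair aG (e v) (e w))
    (hx0 : ∀ v : sigmaPerp σ,
      Int.ModEq 2
        ((v : Fin (n + 2) → ℤ) a + (v : Fin (n + 2) → ℤ) b
          + (v : Fin (n + 2) → ℤ) c + (v : Fin (n + 2) → ℤ) d)
        (e v 0))
    {v w : Fin (n + 2) → ℤ} (hv : OddIrr σ a b c d v) (hw : OddIrr σ a b c d w) :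
    v ⬝ᵥ v ≤ |v ⬝ᵥ w| + 1 ∨ w ⬝ᵥ w ≤ |v ⬝ᵥ w| + 1 := by
  have hlin : ∀ (u : Fin (n + 2) → ℤ) (hu : OddIrr σ a b c d u),
      LinIrr aG (e ⟨u, hu.perp⟩) ∧ e ⟨u, hu.perp⟩ 0 ≠ 0 := by
    intro u hu
    constructor
    · intro y z hyz h0
      have h1 := hiso (e.symm y) (e.symm z)
      rw [e.apply_symm_apply, e.apply_symm_apply] at h1
      have h2 : e.symm y + e.symm z = ⟨u, hu.perp⟩ := by
        rw [← map_add, hyz, e.symm_apply_apply]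
      rcases hu.irr (e.symm y : Fin (n + 2) → ℤ) (e.symm z : Fin (n + 2) → ℤ)
        (e.symm y).2 (e.symm z).2 (congrArg Subtype.val h2) (h0.trans_eq h1.symm) with h | h
      · left
        have : e.symm y = 0 := Subtype.ext h
        simpa using this
      · right
        have : e.symm z = 0 := Subtype.ext h
        simpa using this
    · intro h
      have h1 := hx0 ⟨u, hu.perp⟩
      rw [h] at h1
      have h2 := Int.odd_iff.mp hu.odd
      have h3 : (u a + u b + u c + u d) % 2 = 0 := h1
      omega
  have e1 := hiso ⟨v, hv.perp⟩ ⟨v, hv.perp⟩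
  have e2 := hiso ⟨w, hw.perp⟩ ⟨w, hw.perp⟩
  have e3 := hiso ⟨v, hv.perp⟩ ⟨w, hw.perp⟩
  have := (hlin v hv).1.pairing haG (hlin w hw).1 (hlin v hv).2 (hlin w hw).2
  rw [← e1, ← e2, ← e3] at this
  exact this

/-- Since the linear lattice has no vector of norm one, no `e_i` lies in `σ^⊥`. -/
lemma sigma_ne_zero {n : ℕ} {σ : Fin (n + 2) → ℤ}
    {aG : Fin (n + 1) → ℤ} (haG : ∀ i, 2 ≤ aG i)
    (e : sigmaPerp σ ≃+ (Fin (n + 1) → ℤ))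
    (hiso : ∀ v w : sigmaPerp σ,
      (∑ i, (v : Fin (n + 2) → ℤ) i * (w : Fin (n + 2) → ℤ) i)
        = linPair aG (e v) (e w)) (i : Fin (n + 2)) : σ i ≠ 0 := by
  intro h
  have hp : (Pi.single i 1 : Fin (n + 2) → ℤ) ⬝ᵥ σ = 0 := by simp [h]
  have h1 := hiso ⟨_, hp⟩ ⟨_, hp⟩
  have h2 : e ⟨_, hp⟩ ≠ 0 := fun hh => by
    have h3 := congrArg Subtype.val ((map_eq_zero_iff e e.injective).mp hh)
    have h4 := congrFun h3 i
    simp at h4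
  have h3 := two_le_linPair_self haG h2
  rw [← h1] at h3
  simp [Pi.single_apply] at h3

/-- The vector `∑_{i ∈ S} e_i - e_k`. -/
def relVec {N : ℕ} (S : Finset (Fin N)) (k : Fin N) : Fin N → ℤ :=
  fun i => (if i ∈ S then 1 else 0) - if i = k then 1 else 0

lemma relVec_dot {N : ℕ} (S : Finset (Fin N)) (k : Fin N) (f : Fin N → ℤ) :
    relVec S k ⬝ᵥ f = ∑ i ∈ S, f i - f k := by
  simp [relVec, dotProduct, sub_mul, sum_sub_distrib]

lemma relVec_dot_relVec {N : ℕ} (S S' : Finset (Fin N)) (k k' : Fin N) :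
    relVec S k ⬝ᵥ relVec S' k' = ((S ∩ S').card : ℤ) - (if k' ∈ S then 1 else 0)
      - ((if k ∈ S' then 1 else 0) - if k = k' then 1 else 0) := by
  rw [relVec_dot]
  simp [relVec, sum_sub_distrib]

lemma relVec_dot_self {N : ℕ} {S : Finset (Fin N)} {k : Fin N} (hk : k ∉ S) :
    relVec S k ⬝ᵥ relVec S k = (S.card : ℤ) + 1 := by
  simp [relVec_dot_relVec, hk]

lemma eq_zero_of_nonneg {N : ℕ} {σ x : Fin N → ℤ} (hpos : ∀ i, 1 ≤ σ i) (h : x ⬝ᵥ σ = 0)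
    (hx : ∀ i, 0 ≤ x i) : x = 0 := by
  have h1 := (sum_eq_zero_iff_of_nonneg
    (fun i _ => mul_nonneg (hx i) (by linarith [hpos i]))).mp h
  funext i
  rcases mul_eq_zero.mp (h1 i (mem_univ i)) with h | h
  · exact h
  · have := hpos i; omega

/-- `x (t - x) ≤ 0` for integers `x` and `|t| ≤ 1`; hence a decomposition with nonnegative
pairing of a vector with entries in `{-1, 0, 1}` is a splitting of its support. -/
lemma split_zero {N : ℕ} {x y v : Fin N → ℤ} (hv : ∀ i, v i = 0 ∨ v i = 1 ∨ v i = -1)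
    (hxy : x + y = v) (h : 0 ≤ x ⬝ᵥ y) (i : Fin N) : x i = 0 ∨ y i = 0 := by
  have hle : ∀ i, x i * y i ≤ 0 := by
    intro i
    have h1 : x i + y i = v i := congrFun hxy i
    rcases hv i with h2 | h2 | h2
    · have : y i = -x i := by omega
      rw [this]; nlinarith [mul_self_nonneg (x i)]
    · rcases le_or_gt (x i) 0 with h3 | h3
      · exact mul_nonpos_of_nonpos_of_nonneg h3 (by omega)
      · exact mul_nonpos_of_nonneg_of_nonpos h3.le (by omega)
    · rcases le_or_gt 0 (x i) with h3 | h3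
      · exact mul_nonpos_of_nonneg_of_nonpos h3 (by omega)
      · exact mul_nonpos_of_nonpos_of_nonneg h3.le (by omega)
  have h0 : ∑ i, x i * y i = 0 := le_antisymm (sum_nonpos fun i _ => hle i) h
  exact mul_eq_zero.mp ((sum_eq_zero_iff_of_nonpos fun i _ => hle i).mp h0 i (mem_univ i))

/-- A relation `σ_k = ∑_{i ∈ S} σ_i` gives an irreducible vector: in a splitting of its support,
the part without `e_k` is nonnegative and orthogonal to the positive vector `σ`. -/
lemma oddIrr_relVec {N : ℕ} {σ : Fin N → ℤ} {a b c d : Fin N} (hpos : ∀ i, 1 ≤ σ i)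
    {S : Finset (Fin N)} {k : Fin N} (hk : k ∉ S) (hS : ∑ i ∈ S, σ i = σ k)
    (hodd : Odd (relVec S k a + relVec S k b + relVec S k c + relVec S k d)) :
    OddIrr σ a b c d (relVec S k) := by
  refine ⟨by rw [relVec_dot, hS, sub_self], hodd, fun x y hx hy hxy h => ?_⟩
  have hs := split_zero (v := relVec S k) (fun i => by
    by_cases h1 : i = k
    · subst h1; simp [relVec, hk]
    · by_cases h2 : i ∈ S <;> simp [relVec, h1, h2]) hxy h
  have hnn : ∀ i, i ≠ k → 0 ≤ relVec S k i := fun i hi => by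
    by_cases h2 : i ∈ S <;> simp [relVec, hi, h2]
  have hsum : ∀ i, x i + y i = relVec S k i := fun i => congrFun hxy i
  rcases hs k with h0 | h0
  · left
    refine eq_zero_of_nonneg hpos hx fun i => ?_
    by_cases hi : i = k
    · rw [hi, h0]
    · have := hnn i hi; have := hsum i; rcases hs i with h1 | h1 <;> omega
  · right
    refine eq_zero_of_nonneg hpos hy fun i => ?_
    by_cases hi : i = k
    · rw [hi, h0]
    · have := hnn i hi; have := hsum i; rcases hs i with h1 | h1 <;> omega

/-- The vector `∑_{i ∈ S} e_i + 2 e_p - e_k` is irreducible when `σ_p = 2` and no index outside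
its support has a value between `2` and `σ_k - 2`. The only splittings not excluded by signs
put one `e_p` in each summand and introduce one further coordinate `∓ e_i` outside the support,
whose value would lie in that range. -/
lemma irr_double {N : ℕ} {σ : Fin N → ℤ} (hpos : ∀ i, 1 ≤ σ i) {S : Finset (Fin N)}
    {k p : Fin N} (hk : k ∉ S) (hp : p ∉ S) (hkp : k ≠ p) (hσp : σ p = 2)
    (hS : ∑ i ∈ S, σ i + 4 = σ k)
    (hout : ∀ i, i ∉ S → i ≠ k → i ≠ p → σ i < 2 ∨ σ k - 2 < σ i)
    (x y : Fin N → ℤ) (hx : x ⬝ᵥ σ = 0) (hy : y ⬝ᵥ σ = 0)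
    (hxy : x + y = relVec S k + Pi.single p 2) (h : 0 ≤ x ⬝ᵥ y) : x = 0 ∨ y = 0 := by
  have hsum : ∀ i, x i + y i = relVec S k i + (Pi.single p 2 : Fin N → ℤ) i := fun i => congrFun hxy i
  have hvp : x p + y p = 2 := by rw [hsum]; simp [relVec, hp, hkp.symm]
  have hvk : x k + y k = -1 := by rw [hsum]; simp [relVec, hk, hkp]
  have hvS : ∀ i ∈ S, x i + y i = 1 := fun i hi => by
    have h1 : i ≠ k := fun hh => hk (hh ▸ hi)
    have h2 : i ≠ p := fun hh => hp (hh ▸ hi)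
    rw [hsum]; simp [relVec, hi, h1, h2]
  have hvo : ∀ i, i ∉ S → i ≠ k → i ≠ p → x i + y i = 0 := fun i h1 h2 h3 => by
    rw [hsum]; simp [relVec, h1, h2, h3]
  have hle : ∀ i, i ≠ p → x i * y i ≤ 0 := by
    intro i hip
    have h2 : x i + y i = 0 ∨ x i + y i = 1 ∨ x i + y i = -1 := by
      by_cases h1 : i = k
      · subst h1; omega
      · by_cases h2 : i ∈ S
        · have := hvS i h2; omega
        · have := hvo i h2 h1 hip; omega
    rcases le_or_gt (x i) 0 with h3 | h3
    · rcases h3.eq_or_lt with h3 | h3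
      · simp [h3]
      · exact mul_nonpos_of_nonpos_of_nonneg h3.le (by omega)
    · exact mul_nonpos_of_nonneg_of_nonpos h3.le (by omega)
  have hlep : x p * y p ≤ 1 := by
    have : y p = 2 - x p := by omega
    rw [this]; nlinarith [mul_self_nonneg (x p - 1)]
  -- any two coordinates other than `p` contribute at least `-1` in total
  have h1 : ∀ i, i ≠ p → -x p * y p ≤ x i * y i := by
    intro i hi
    have : x ⬝ᵥ y ≤ ∑ k, ((if k = p then x p * y p else 0) + if k = i then x i * y i else 0) := by
      refine sum_le_sum fun k _ => ?_
      by_cases h1 : k = p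
      · subst h1; simp [hi.symm]
      · by_cases h2 : k = i
        · subst h2; simp [h1]
        · simpa [h1, h2] using hle k h1
    simp [sum_add_distrib] at this
    linarith
  have h2 : ∀ i i', i ≠ p → i' ≠ p → i ≠ i' → -x p * y p ≤ x i * y i + x i' * y i' := by
    intro i i' hi hi' hii
    have : x ⬝ᵥ y ≤ ∑ k, ((if k = p then x p * y p else 0) + (if k = i then x i * y i else 0)
        + if k = i' then x i' * y i' else 0) := by
      refine sum_le_sum fun k _ => ?_
      by_cases h1 : k = p
      · subst h1; simp [hi.symm, hi'.symm]
      · by_cases h2 : k = i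
        · subst h2; simp [h1, hii]
        · by_cases h3 : k = i'
          · subst h3; simp [h1, hii.symm]
          · simpa [h1, h2, h3] using hle k h1
    simp [sum_add_distrib] at this
    linarith
  clear h
  -- by symmetry the summand without `e_k` is the first one
  wlog hxk : x k = 0 generalizing x y
  · have hyk : y k = 0 := by
      by_contra hyk
      have := h1 k hkp
      have : x k ≤ -2 ∨ 1 ≤ x k := by omega
      rcases this with h | h
      · nlinarith
      · nlinarith
    have hc : ∀ i, y i * x i = x i * y i := fun i => mul_comm _ _
    refine (this y x hy hx (by rw [add_comm, hxy]) (fun i => by rw [add_comm, hsum])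
      (by omega) (by omega) (fun i hi => by rw [add_comm]; exact hvS i hi)
      (fun i p1 p2 p3 => by rw [add_comm]; exact hvo i p1 p2 p3)
      (fun i hi => by rw [hc]; exact hle i hi) (by rw [hc]; exact hlep)
      (fun i hi => by have := h1 i hi; rw [hc]; linarith [hc p])
      (fun i i' q1 q2 q3 => by have := h2 i i' q1 q2 q3; rw [hc, hc]; linarith [hc p])
      hyk).symm
  left
  have hxS : ∀ i ∈ S, 0 ≤ x i ∧ x i ≤ 1 := by
    intro i hi
    have h3 : i ≠ p := fun hh => hp (hh ▸ hi)
    have h4 := h1 i h3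
    have h5 := hvS i hi
    have h6 : y i = 1 - x i := by omega
    rw [h6] at h4
    constructor <;> nlinarith
  by_cases hneg : ∀ i, i ≠ p → 0 ≤ x i
  · refine eq_zero_of_nonneg hpos hx fun i => ?_
    by_cases hi : i = p
    · rw [hi]
      by_contra hlt
      have h3 := h1 k hkp
      rw [hxk, zero_mul] at h3
      have : y p = 2 - x p := by omega
      rw [this] at h3
      nlinarith
    · exact hneg i hi
  · exfalso
    push Not at hneg
    obtain ⟨i, hip, hi⟩ := hneg
    have hik : i ≠ k := fun hh => by rw [hh, hxk] at hi; exact lt_irrefl _ hi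
    have hiS : i ∉ S := fun hh => by have := (hxS i hh).1; omega
    have hyi : y i = -x i := by have := hvo i hiS hik hip; omega
    have h3 := h1 i hip
    rw [hyi] at h3
    have hxp : x p = 1 := by
      have h4 : y p = 2 - x p := by omega
      rw [h4] at h3
      by_contra hne
      have h5 : x p ≤ 0 ∨ 2 ≤ x p := by omega
      rcases h5 with h5 | h5 <;> nlinarith
    have hyp : y p = 1 := by omega
    rw [hxp, hyp] at h3
    have hxi : x i = -1 := by nlinarith
    have hzero : ∀ i', i' ∉ S → i' ≠ p → i' ≠ i → x i' = 0 := by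
      intro i' h4 h5 h6
      by_cases h7 : i' = k
      · rw [h7, hxk]
      · have h8 := h2 i i' hip h5 h6.symm
        have h9 : y i' = -x i' := by have := hvo i' h4 h7 h5; omega
        rw [hxp, hyp, hyi, hxi, h9] at h8
        by_contra hne
        have : x i' ≤ -1 ∨ 1 ≤ x i' := by omega
        rcases this with h | h <;> nlinarith
    have hval : x ⬝ᵥ σ = σ p - σ i + ∑ j ∈ S, x j * σ j := by
      have : ∀ j, x j * σ j = (if j = p then σ p else 0) - (if j = i then σ i else 0)
          + if j ∈ S then x j * σ j else 0 := by
        intro j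
        by_cases hj : j = p
        · subst hj; simp [hp, hip.symm, hxp]
        · by_cases hji : j = i
          · subst hji; simp [hj, hiS, hxi]
          · by_cases hjS : j ∈ S
            · simp [hj, hji, hjS]
            · simp [hj, hji, hjS, hzero j hjS hj hji]
      rw [dotProduct, sum_congr rfl fun j _ => this j]
      simp [sum_add_distrib, sum_sub_distrib]
    have hb1 : 0 ≤ ∑ j ∈ S, x j * σ j :=
      sum_nonneg fun j hj => mul_nonneg (hxS j hj).1 (by linarith [hpos j])
    have hb2 : ∑ j ∈ S, x j * σ j ≤ ∑ j ∈ S, σ j :=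
      sum_le_sum fun j hj => by nlinarith [(hxS j hj).2, hpos j]
    rcases hout i hiS hik hip with h4 | h4 <;> linarith

/-! ### The structure of `σ` on small indices -/

/-- The indices other than `a, b, c, d`. -/
def rest {N : ℕ} (a b c d : Fin N) : Finset (Fin N) :=
  univ.filter fun i => i ≠ a ∧ i ≠ b ∧ i ≠ c ∧ i ≠ d

lemma mem_rest {N : ℕ} {a b c d i : Fin N} :
    i ∈ rest a b c d ↔ i ≠ a ∧ i ≠ b ∧ i ≠ c ∧ i ≠ d := by simp [rest]

/-- The part of the hypotheses used by the combinatorial argument: the isometry with a linear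
lattice enters only through `pos` and `pairing`, and the test-vector condition is rewritten in
`test` as a statement about sums over subsets of the indices other than `a, b, c, d`. -/
structure Setup {N : ℕ} (σ : Fin N → ℤ) (a b c d : Fin N) (θ : ℤ) : Prop where
  pos : ∀ i, 1 ≤ σ i
  mono : ∀ i j, i ≤ j → σ i ≤ σ j
  hdc : d < c
  hcb : c < b
  hba : b < a
  hmax : ∀ i j, (i = a ∨ i = b ∨ i = c ∨ i = d) → j ∈ rest a b c d → σ i = σ j → j < i
  pairing : ∀ v w, OddIrr σ a b c d v → OddIrr σ a b c d w →
    v ⬝ᵥ v ≤ |v ⬝ᵥ w| + 1 ∨ w ⬝ᵥ w ≤ |v ⬝ᵥ w| + 1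
  hθ : θ = 1 ∨ θ = -1
  hσa : σ a = σ b + σ c + σ d + θ
  test : ∀ j : ℤ, 0 ≤ j → j ≤ 2 * σ a + ∑ i ∈ rest a b c d, σ i →
    ∃ S ⊆ rest a b c d, ∃ r : ℤ, ∑ i ∈ S, σ i + r = j ∧
      (r = 0 ∨ r = σ a - σ b ∨ r = σ a - σ c ∨ r = σ a - σ d ∨ r = σ a + σ d ∨
        r = σ a + σ c ∨ r = σ a + σ b ∨ r = 2 * σ a)

namespace Setup

variable {N : ℕ} {σ : Fin N → ℤ} {a b c d : Fin N} {θ : ℤ}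

lemma sum_nonneg (h : Setup σ a b c d θ) (S : Finset (Fin N)) : 0 ≤ ∑ i ∈ S, σ i :=
  Finset.sum_nonneg fun i _ => by linarith [h.pos i]

lemma nonempty_of_sum (S : Finset (Fin N)) (hS : 1 ≤ ∑ i ∈ S, σ i) : S.Nonempty := by
  rw [nonempty_iff_ne_empty]; rintro rfl; simp at hS

/-- The pairing bound for two vectors `∑_{i ∈ S} e_i - e_k`, in terms of cardinalities. -/
lemma pairing_relVec (h : Setup σ a b c d θ) {S S' : Finset (Fin N)} {k k' : Fin N}
    (hk : k ∉ S) (hk' : k' ∉ S') (hkk : k ≠ k')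
    (hS : ∑ i ∈ S, σ i = σ k) (hS' : ∑ i ∈ S', σ i = σ k')
    (ho : Odd (relVec S k a + relVec S k b + relVec S k c + relVec S k d))
    (ho' : Odd (relVec S' k' a + relVec S' k' b + relVec S' k' c + relVec S' k' d)) :
    (S.card : ℤ) ≤ |((S ∩ S').card : ℤ) - (if k' ∈ S then 1 else 0)
      - (if k ∈ S' then 1 else 0)| ∨
    (S'.card : ℤ) ≤ |((S ∩ S').card : ℤ) - (if k' ∈ S then 1 else 0)
      - (if k ∈ S' then 1 else 0)| := by
  have := h.pairing _ _ (oddIrr_relVec h.pos hk hS ho) (oddIrr_relVec h.pos hk' hS' ho')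
  rw [relVec_dot_self hk, relVec_dot_self hk', relVec_dot_relVec, if_neg hkk, sub_zero] at this
  simpa using this

/-- Below `σ_a - σ_b = σ_c + σ_d + θ` every integer is a sum of entries outside
`a, b, c, d`, because the other contributions to a test vector are too large. -/
lemma small_sum (h : Setup σ a b c d θ) {j : ℤ} (h0 : 0 ≤ j) (hj : j < σ c + σ d + θ) :
    ∃ S ⊆ rest a b c d, ∑ i ∈ S, σ i = j := by
  have := h.hσa
  have := h.pos b
  have := h.pos d
  have := h.mono _ _ h.hdc.le
  have := h.mono _ _ h.hcb.le
  have := h.sum_nonneg (rest a b c d)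
  obtain ⟨S, hS, r, hr, hr'⟩ := h.test j h0 (by linarith)
  have := h.sum_nonneg S
  exact ⟨S, hS, by omega⟩

lemma not_mem_of_sub {S : Finset (Fin N)} (hS : S ⊆ rest a b c d) :
    a ∉ S ∧ b ∉ S ∧ c ∉ S ∧ d ∉ S := by
  refine ⟨?_, ?_, ?_, ?_⟩ <;> intro hh <;> simpa [mem_rest] using hS hh

lemma odd_relVec_of_sub {S : Finset (Fin N)} (hS : S ⊆ rest a b c d) {k : Fin N}
    (hk : k = c ∨ k = d) (hdc : d < c) (hcb : c < b) (hba : b < a) :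
    Odd (relVec S k a + relVec S k b + relVec S k c + relVec S k d) := by
  obtain ⟨h1, h2, h3, h4⟩ := not_mem_of_sub hS
  rcases hk with rfl | rfl
  · simp [relVec, h1, h2, h3, h4, hdc.ne, hcb.ne', (hcb.trans hba).ne']
  · simp [relVec, h1, h2, h3, h4, hdc.ne', (hdc.trans hcb).ne', (hdc.trans (hcb.trans hba)).ne']

lemma odd_relVec_bc {S : Finset (Fin N)} (hS : S ⊆ rest a b c d)
    (hdc : d < c) (hcb : c < b) (hba : b < a) :
    Odd (relVec (insert b (insert c S)) a a + relVec (insert b (insert c S)) a b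
      + relVec (insert b (insert c S)) a c + relVec (insert b (insert c S)) a d) := by
  obtain ⟨h1, h2, h3, h4⟩ := not_mem_of_sub hS
  have q1 := hdc.ne
  have q2 := hcb.ne
  have q3 := hba.ne
  have q4 := (hdc.trans hcb).ne
  have q5 := (hcb.trans hba).ne
  have q6 := (hdc.trans (hcb.trans hba)).ne
  simp [relVec, h1, h2, h3, h4, q1, q2, q3, q4, q5, q6, q1.symm, q2.symm, q3.symm, q4.symm,
    q5.symm, q6.symm]

/-- If `S ⊆ rest` sums to `σ_d` and `R ⊆ rest` sums to `σ_d + θ`, then comparing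
`∑_S e_i - e_d` with `e_b + e_c + ∑_R e_i - e_a` gives `S ⊆ R`. -/
lemma sub_of_sum_d (h : Setup σ a b c d θ) {S R : Finset (Fin N)}
    (hS : S ⊆ rest a b c d) (hR : R ⊆ rest a b c d)
    (hSs : ∑ i ∈ S, σ i = σ d) (hRs : ∑ i ∈ R, σ i = σ d + θ) : S ⊆ R := by
  obtain ⟨s1, s2, s3, s4⟩ := not_mem_of_sub hS
  obtain ⟨r1, r2, r3, r4⟩ := not_mem_of_sub hR
  have q1 := h.hdc
  have q2 := h.hcb
  have q3 := h.hba
  have hb : b ∉ insert c R := by simp [r2, q2.ne']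
  have hw : a ∉ insert b (insert c R) := by simp [r1, q3.ne', (q2.trans q3).ne']
  have hd : d ∉ insert b (insert c R) := by simp [r4, q1.ne, (q1.trans q2).ne]
  have key := h.pairing_relVec s4 hw (q1.trans (q2.trans q3)).ne hSs
    (by rw [sum_insert hb, sum_insert r3, hRs, h.hσa]; ring)
    (odd_relVec_of_sub hS (Or.inr rfl) q1 q2 q3) (odd_relVec_bc hR q1 q2 q3)
  rw [if_neg s1, if_neg hd, inter_insert_of_notMem s2, inter_insert_of_notMem s3,
    card_insert_of_notMem hb, card_insert_of_notMem r3] at key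
  simp only [sub_zero, Nat.abs_cast, Nat.cast_le] at key
  have h1 : (S ∩ R).card ≤ R.card := card_le_card inter_subset_right
  rcases key with key | key
  · rw [← eq_of_subset_of_card_le inter_subset_left key]; exact inter_subset_right
  · omega

/-- If `θ = 1`, then `σ_c`, `σ_d` and `σ_d + 1` are all sums of entries outside `a, b, c, d`; the
corresponding initial segments cannot be nested compatibly. -/
lemma theta_eq (h : Setup σ a b c d θ) : θ = -1 := by
  refine h.hθ.resolve_left fun hθ => ?_
  have q1 := h.hdc
  have q2 := h.hcb
  have q3 := h.hba
  have pd := h.pos d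
  have pc := h.pos c
  obtain ⟨S, hS, hSs⟩ := h.small_sum (j := σ d) (by omega) (by omega)
  obtain ⟨T, hT, hTs⟩ := h.small_sum (j := σ c) (by omega) (by omega)
  obtain ⟨R, hR, hRs⟩ := h.small_sum (j := σ d + θ) (by omega) (by omega)
  have hSR := h.sub_of_sum_d hS hR hSs hRs
  obtain ⟨s1, s2, s3, s4⟩ := not_mem_of_sub hS
  obtain ⟨t1, t2, t3, t4⟩ := not_mem_of_sub hT
  obtain ⟨r1, r2, r3, r4⟩ := not_mem_of_sub hR
  have hST : (S ∩ T).Nonempty := by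
    have key := h.pairing_relVec s4 t3 q1.ne hSs hTs
      (odd_relVec_of_sub hS (Or.inr rfl) q1 q2 q3) (odd_relVec_of_sub hT (Or.inl rfl) q1 q2 q3)
    rw [if_neg s3, if_neg t4] at key
    simp only [sub_zero, Nat.abs_cast, Nat.cast_le] at key
    have n1 := card_pos.mpr (nonempty_of_sum S (hSs ▸ pd))
    have n2 := card_pos.mpr (nonempty_of_sum T (hTs ▸ pc))
    exact card_pos.mp (by omega)
  have hTR : 1 ≤ (T ∩ R).card := card_pos.mpr (hST.mono fun i hi => by
    rw [mem_inter] at hi ⊢; exact ⟨hi.2, hSR hi.1⟩)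
  have hb : b ∉ insert c R := by simp [r2, q2.ne']
  have hw : a ∉ insert b (insert c R) := by simp [r1, q3.ne', (q2.trans q3).ne']
  have key := h.pairing_relVec t3 hw (q2.trans q3).ne hTs
    (by rw [sum_insert hb, sum_insert r3, hRs, h.hσa]; ring)
    (odd_relVec_of_sub hT (Or.inl rfl) q1 q2 q3) (odd_relVec_bc hR q1 q2 q3)
  rw [if_neg t1, if_pos (by simp), inter_insert_of_notMem t2, inter_insert_of_notMem t3,
    card_insert_of_notMem hb, card_insert_of_notMem r3, abs_of_nonneg (by push_cast; omega)] at key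
  have h1 : (T ∩ R).card ≤ T.card := card_le_card inter_subset_left
  have h2 : (T ∩ R).card ≤ R.card := card_le_card inter_subset_right
  push_cast at key
  omega

lemma not_sum_d (h : Setup σ a b c d θ) {S : Finset (Fin N)} (hS : S ⊆ rest a b c d) :
    ∑ i ∈ S, σ i ≠ σ d := by
  intro hSs
  have hθ := h.theta_eq
  have := h.pos d
  have := h.pos c
  obtain ⟨R, hR, hRs⟩ := h.small_sum (j := σ d + θ) (by omega) (by omega)
  have h1 := sum_le_sum_of_subset_of_nonneg (h.sub_of_sum_d hS hR hSs hRs)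
    (f := σ) fun i _ _ => by linarith [h.pos i]
  omega

lemma sigma_c (h : Setup σ a b c d θ) : σ c = 1 := by
  by_contra hc
  have hθ := h.theta_eq
  have := h.pos d
  have := h.pos c
  obtain ⟨S, hS, hSs⟩ := h.small_sum (j := σ d) (by omega) (by omega)
  exact h.not_sum_d hS hSs

lemma sigma_d (h : Setup σ a b c d θ) : σ d = 1 := by
  have := h.pos d
  have := h.mono _ _ h.hdc.le
  have := h.sigma_c
  omega

lemma sigma_a (h : Setup σ a b c d θ) : σ a = σ b + 1 := by
  have := h.hσa
  have := h.theta_eq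
  have := h.sigma_c
  have := h.sigma_d
  omega

lemma two_le_of_mem_rest (h : Setup σ a b c d θ) {i : Fin N} (hi : i ∈ rest a b c d) :
    2 ≤ σ i := by
  have h1 := h.not_sum_d (S := {i}) (by simpa using hi)
  rw [sum_singleton, h.sigma_d] at h1
  have := h.pos i
  omega

/-- If `σ_b = 2`, then `e_c + e_d - e_b` is orthogonal to `e_b + e_c - e_a`. If `σ_b ≥ 3`, then
some `σ_k = 2`, and `e_b + e_k - e_a - e_d` has pairing `1` with `e_b + e_d - e_a`. Neither is
possible for odd irreducible vectors of these norms. -/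
lemma sigma_b (h : Setup σ a b c d θ) : σ b = 1 := by
  have hσa := h.sigma_a
  have hσc := h.sigma_c
  have hσd := h.sigma_d
  have pb := h.pos b
  have q1 := h.hdc.ne
  have q2 := h.hcb.ne
  have q3 := h.hba.ne
  have q4 := (h.hdc.trans h.hcb).ne
  have q5 := (h.hcb.trans h.hba).ne
  have q6 := (h.hdc.trans (h.hcb.trans h.hba)).ne
  by_contra hb
  rcases (by omega : σ b = 2 ∨ 3 ≤ σ b) with hb | hb
  · have key := h.pairing_relVec (S := {c, d}) (S' := {b, c}) (k := b) (k' := a)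
      (by simp [q2.symm, q4.symm]) (by simp [q3.symm, q5.symm]) q3
      (by rw [sum_pair q1.symm]; omega) (by rw [sum_pair q2.symm]; omega)
      (by simp [relVec, q1, q2, q3, q4, q5, q6, q1.symm, q2.symm, q3.symm, q4.symm,
        q5.symm, q6.symm])
      (by simp [relVec, q1, q2, q3, q4, q5, q6, q1.symm, q2.symm, q3.symm, q4.symm,
        q5.symm, q6.symm])
    have hi : ({c, d} : Finset (Fin N)) ∩ {b, c} = {c} := by
      ext i; simp only [mem_inter, mem_insert, mem_singleton]
      constructor
      · rintro ⟨rfl | rfl, hh⟩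
        · rfl
        · exact absurd hh (by simp [q1, q4])
      · rintro rfl; simp
    rw [hi, if_neg (by simp [q5.symm, q6.symm]), if_pos (by simp), card_pair q1.symm,
      card_pair q2.symm] at key
    simp at key
  · -- an index `k` outside `a, b, c, d` with `σ k = 2`
    obtain ⟨k, hk, hk2⟩ : ∃ k ∈ rest a b c d, σ k = 2 := by
      have := h.sum_nonneg (rest a b c d)
      obtain ⟨S, hS, r, hr, hr'⟩ := h.test 2 (by omega) (by omega)
      have := h.sum_nonneg S
      have hne := h.not_sum_d hS
      obtain ⟨k, hk⟩ := nonempty_of_sum (σ := σ) S (by omega)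
      have h1 := h.two_le_of_mem_rest (hS hk)
      have h2 := single_le_sum (f := σ) (fun i _ => by linarith [h.pos i]) hk
      exact ⟨k, hS hk, by omega⟩
    obtain ⟨ka, kb, kc, kd⟩ := mem_rest.mp hk
    have hdot : ∀ f : Fin N → ℤ, (fun i => (if i = b then 1 else 0) + (if i = k then 1 else 0)
        - (if i = a then 1 else 0) - (if i = d then 1 else 0) : Fin N → ℤ) ⬝ᵥ f
        = f b + f k - f a - f d := fun f => by
      simp [dotProduct, sub_mul, add_mul, sum_sub_distrib, sum_add_distrib]
    set v : Fin N → ℤ := fun i => (if i = b then 1 else 0) + (if i = k then 1 else 0)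
        - (if i = a then 1 else 0) - (if i = d then 1 else 0) with hv
    have va : v a = -1 := by simp [hv, q3.symm, ka.symm, q6.symm]
    have vb : v b = 1 := by simp [hv, q3, kb.symm, q4.symm]
    have vc : v c = 0 := by simp [hv, q2, kc.symm, q5, q1.symm]
    have vd : v d = -1 := by simp [hv, q4, kd.symm, q6]
    have vk : v k = 1 := by simp [hv, ka, kb, kd]
    have vo : ∀ i, i ≠ a → i ≠ b → i ≠ d → i ≠ k → v i = 0 := fun i h1 h2 h3 h4 => by
      simp [hv, h1, h2, h3, h4]
    have ho : OddIrr σ a b c d v := by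
      refine ⟨by rw [hdot]; omega, by rw [va, vb, vc, vd]; decide, fun x y hx hy hxy hn => ?_⟩
      have hs : ∀ i, x i + y i = v i := fun i => congrFun hxy i
      have hz := split_zero (v := v) (fun i => by
        by_cases h1 : i = a
        · subst h1; omega
        by_cases h2 : i = b
        · subst h2; omega
        by_cases h3 : i = d
        · subst h3; omega
        by_cases h4 : i = k
        · subst h4; omega
        · left; exact vo i h1 h2 h3 h4) hxy hn
      have hxo : ∀ i, i ≠ a → i ≠ b → i ≠ d → i ≠ k → x i = 0 ∧ y i = 0 :=
        fun i h1 h2 h3 h4 => by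
          have := vo i h1 h2 h3 h4; have := hs i
          rcases hz i with hh | hh <;> omega
      have hsum : x b * σ b + x k * σ k + x a * σ a + x d * σ d = 0 := by
        rw [← hx]
        have : ∀ i, x i * σ i = (if i = b then x b * σ b else 0)
            + (if i = k then x k * σ k else 0) + (if i = a then x a * σ a else 0)
            + (if i = d then x d * σ d else 0) := by
          intro i
          by_cases h1 : i = a
          · subst h1; simp [q3.symm, ka.symm, q6.symm]
          by_cases h2 : i = b
          · subst h2; simp [q3, kb.symm, q4.symm]
          by_cases h3 : i = d
          · subst h3; simp [q4, kd.symm, q6]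
          by_cases h4 : i = k
          · subst h4; simp [ka, kb, kd]
          · simp [h1, h2, h3, h4, (hxo i h1 h2 h3 h4).1]
        rw [dotProduct, sum_congr rfl fun i _ => this i]
        simp [sum_add_distrib]
      have ea := hs a
      have eb := hs b
      have ed := hs d
      have ek := hs k
      have fin : (x a = 0 ∧ x b = 0 ∧ x d = 0 ∧ x k = 0) ∨
          (y a = 0 ∧ y b = 0 ∧ y d = 0 ∧ y k = 0) := by
        rw [hσd, hσa, hk2] at hsum
        have ga : x a = 0 ∨ x a = -1 := by rcases hz a with hh | hh <;> omega
        have gb : x b = 0 ∨ x b = 1 := by rcases hz b with hh | hh <;> omega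
        have gd : x d = 0 ∨ x d = -1 := by rcases hz d with hh | hh <;> omega
        have gk : x k = 0 ∨ x k = 1 := by rcases hz k with hh | hh <;> omega
        rcases ga with ga | ga <;> rcases gb with gb | gb <;> rcases gd with gd | gd <;>
          rcases gk with gk | gk <;> rw [ga, gb, gd, gk] at hsum <;> omega
      rcases fin with ⟨f1, f2, f3, f4⟩ | ⟨f1, f2, f3, f4⟩
      · left; funext i
        by_cases h1 : i = a
        · rw [h1, f1]; rfl
        by_cases h2 : i = b
        · rw [h2, f2]; rfl
        by_cases h3 : i = d
        · rw [h3, f3]; rfl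
        by_cases h4 : i = k
        · rw [h4, f4]; rfl
        · exact (hxo i h1 h2 h3 h4).1
      · right; funext i
        by_cases h1 : i = a
        · rw [h1, f1]; rfl
        by_cases h2 : i = b
        · rw [h2, f2]; rfl
        by_cases h3 : i = d
        · rw [h3, f3]; rfl
        by_cases h4 : i = k
        · rw [h4, f4]; rfl
        · exact (hxo i h1 h2 h3 h4).2
    have ho' : OddIrr σ a b c d (relVec {b, d} a) :=
      oddIrr_relVec h.pos (by simp [q3.symm, q6.symm]) (by rw [sum_pair q4.symm]; omega)
        (by simp [relVec, q1, q2, q3, q4, q5, q6, q1.symm, q2.symm, q3.symm, q4.symm,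
          q5.symm, q6.symm])
    have key := h.pairing _ _ ho ho'
    rw [hdot, hdot, relVec_dot_self (by simp [q3.symm, q6.symm]), card_pair q4.symm,
      va, vb, vd, vk] at key
    have e1 : relVec {b, d} a b = 1 := by simp [relVec, q3]
    have e2 : relVec {b, d} a k = 0 := by simp [relVec, kb, kd, ka]
    have e3 : relVec {b, d} a a = -1 := by simp [relVec, q3.symm, q6.symm]
    have e4 : relVec {b, d} a d = 1 := by simp [relVec, q6]
    rw [e1, e2, e3, e4] at key
    norm_num at key

/-! ### The entries after `σ_a` -/

lemma sigma_a_eq_two (h : Setup σ a b c d θ) : σ a = 2 := by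
  have := h.sigma_a; have := h.sigma_b; omega

lemma b_lt_of_mem_rest (h : Setup σ a b c d θ) {i : Fin N} (hi : i ∈ rest a b c d) : b < i := by
  by_contra hle
  have := h.mono _ _ (not_lt.mp hle)
  have := h.two_le_of_mem_rest hi
  have := h.sigma_b
  omega

lemma mem_rest_of_b_lt (h : Setup σ a b c d θ) {i : Fin N} (hi : b < i) (hia : i ≠ a) :
    i ∈ rest a b c d :=
  mem_rest.mpr ⟨hia, hi.ne', (h.hcb.trans hi).ne', (h.hdc.trans (h.hcb.trans hi)).ne'⟩

lemma mem_rest_of_a_lt (h : Setup σ a b c d θ) {i : Fin N} (hi : a < i) : i ∈ rest a b c d :=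
  h.mem_rest_of_b_lt (h.hba.trans hi) hi.ne'

lemma sigma_between (h : Setup σ a b c d θ) {i : Fin N} (hi : i ∈ Ioo b a) : σ i = 2 := by
  rw [mem_Ioo] at hi
  have := h.two_le_of_mem_rest (h.mem_rest_of_b_lt hi.1 hi.2.ne)
  have := h.mono _ _ hi.2.le
  have := h.sigma_a_eq_two
  omega

lemma three_le_of_a_lt (h : Setup σ a b c d θ) {j : Fin N} (hj : a < j) : 3 ≤ σ j := by
  have h1 := h.two_le_of_mem_rest (h.mem_rest_of_a_lt hj)
  have h2 := h.sigma_a_eq_two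
  by_contra hlt
  exact (h.hmax a j (Or.inl rfl) (h.mem_rest_of_a_lt hj) (by omega)).asymm hj

/-- The vector `e_c + e_d - e_a` of norm `3` excludes every relation `σ_j = ∑_X σ_i + ∑_R σ_i`
with `R ⊆ rest` and `X` as listed: it has pairing `±1` with the resulting vector. -/
lemma no_relation (h : Setup σ a b c d θ) {X R : Finset (Fin N)} {j : Fin N}
    (hX : X = {d} ∨ X = {a} ∨ X = {a, c, d}) (hR : R ⊆ rest a b c d)
    (hj : a < j) (hjR : j ∉ R) (hs : ∑ i ∈ X, σ i + ∑ i ∈ R, σ i = σ j) : False := by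
  have hσa := h.sigma_a_eq_two
  have hσc := h.sigma_c
  have hσd := h.sigma_d
  have h3 := h.three_le_of_a_lt hj
  have q1 := h.hdc.ne
  have q2 := h.hcb.ne
  have q3 := h.hba.ne
  have q4 := (h.hdc.trans h.hcb).ne
  have q5 := (h.hcb.trans h.hba).ne
  have q6 := (h.hdc.trans (h.hcb.trans h.hba)).ne
  obtain ⟨r1, r2, r3, r4⟩ := not_mem_of_sub hR
  obtain ⟨j1, j2, j3, j4⟩ := mem_rest.mp (h.mem_rest_of_a_lt hj)
  have hXR : Disjoint X R := by
    rcases hX with rfl | rfl | rfl <;> simp [r1, r3, r4]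
  have hjX : j ∉ X := by rcases hX with rfl | rfl | rfl <;> simp [j1, j3, j4]
  have key := h.pairing_relVec (S := X ∪ R) (S' := {c, d}) (k := j) (k' := a)
    (by simp [hjX, hjR]) (by simp [q5.symm, q6.symm]) j1
    (by rw [sum_union hXR, hs]) (by rw [sum_pair q1.symm]; omega)
    (by
      rcases hX with rfl | rfl | rfl <;>
      simp [relVec, r1, r2, r3, r4, q1, q2, q3, q4, q5, q6, q1.symm, q2.symm, q3.symm, q4.symm,
        q5.symm, q6.symm, j1.symm, j2.symm, j3.symm, j4.symm] <;> decide)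
    (by simp [relVec, q1, q2, q3, q4, q5, q6, q1.symm, q2.symm, q3.symm, q4.symm,
        q5.symm, q6.symm])
  have hRcd : R ∩ {c, d} = ∅ := eq_empty_of_forall_notMem fun i hi => by
    simp only [mem_inter, mem_insert, mem_singleton] at hi
    rcases hi with ⟨hi, rfl | rfl⟩ <;> contradiction
  rw [union_inter_distrib_right, hRcd, union_empty,
    if_neg (show j ∉ ({c, d} : Finset (Fin N)) by simp [j3, j4]),
    card_pair q1.symm, card_union_of_disjoint hXR] at key
  -- a relation with a single term would read `σ_j = 1` or `σ_j = 2`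
  have hcard : 2 ≤ X.card + R.card := by
    by_contra hlt
    have hX1 : 1 ≤ X.card := by rcases hX with rfl | rfl | rfl <;> simp
    have hR0 : R = ∅ := card_eq_zero.mp (by omega)
    rw [hR0, sum_empty] at hs
    rcases hX with rfl | rfl | rfl
    · simp at hs; omega
    · simp at hs; omega
    · rw [card_insert_of_notMem (by simp [q5.symm, q6.symm]), card_pair q1.symm] at hlt; omega
  have hp : |((X ∩ {c, d}).card : ℤ) - (if a ∈ X ∪ R then 1 else 0) - 0| ≤ 1 := by
    rcases hX with rfl | rfl | rfl
    · have : ({d} : Finset (Fin N)) ∩ {c, d} = {d} := by ext i; simp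
      rw [this]; simp [r1, q6.symm]
    · have : ({a} : Finset (Fin N)) ∩ {c, d} = ∅ := by
        rw [← disjoint_iff_inter_eq_empty]; simp [q5.symm, q6.symm]
      rw [this]; simp
    · have : ({a, c, d} : Finset (Fin N)) ∩ {c, d} = {c, d} := by ext i; simp
      rw [this, card_pair q1.symm]; simp
  rcases key with key | key <;> have := key.trans hp <;> omega

/-- The sums available from the entries between `b` and `a` and those between `a` and `j`, when
the latter all equal `K`. -/
lemma exists_sum (h : Setup σ a b c d θ) {j : Fin N} {K : ℤ} (hj : a < j)
    (hG : ∀ i ∈ Ioo a j, σ i = K) {t q : ℕ} (ht : t ≤ (Ioo b a).card) (hq : q ≤ (Ioo a j).card) :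
    ∃ R ⊆ rest a b c d, j ∉ R ∧ ∑ i ∈ R, σ i = 2 * t + K * q := by
  obtain ⟨T₁, hT₁, c₁⟩ := exists_subset_card_eq ht
  obtain ⟨T₂, hT₂, c₂⟩ := exists_subset_card_eq hq
  have hd : Disjoint T₁ T₂ := disjoint_left.mpr fun i h1 h2 =>
    (mem_Ioo.mp (hT₁ h1)).2.asymm (mem_Ioo.mp (hT₂ h2)).1
  refine ⟨T₁ ∪ T₂, ?_, ?_, ?_⟩
  · intro i hi
    rcases mem_union.mp hi with hi | hi
    · have := mem_Ioo.mp (hT₁ hi)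
      exact h.mem_rest_of_b_lt this.1 this.2.ne
    · exact h.mem_rest_of_a_lt (mem_Ioo.mp (hT₂ hi)).1
  · intro hi
    rcases mem_union.mp hi with hi | hi
    · exact (mem_Ioo.mp (hT₁ hi)).2.asymm hj
    · exact lt_irrefl _ (mem_Ioo.mp (hT₂ hi)).2
  · rw [sum_union hd, sum_congr rfl fun i hi => h.sigma_between (hT₁ hi),
      sum_congr rfl fun i hi => hG i (hT₂ hi)]
    simp [c₁, c₂]; ring

/-- If `σ_j = K q + ρ` with `ρ ≥ 1`, where `K` is the common value of the entries between `a` and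
`j` and `q` is at most their number, then `ρ` is none of `1, …, 2s + 2, 2s + 4`, where
`s = |Ioo b a|`: otherwise `ρ` is `σ_d`, `σ_a` or `σ_a + σ_c + σ_d` plus a multiple of `2` that the
entries between `b` and `a` supply, contradicting `no_relation`. -/
lemma residue (h : Setup σ a b c d θ) {j : Fin N} {K : ℤ} (hj : a < j)
    (hG : ∀ i ∈ Ioo a j, σ i = K) {q : ℕ} (hq : q ≤ (Ioo a j).card) {ρ : ℕ}
    (hρ : σ j = K * q + ρ) (h1 : 1 ≤ ρ) :
    2 * (Ioo b a).card + 3 ≤ ρ ∧ ρ ≠ 2 * (Ioo b a).card + 4 := by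
  have hσa := h.sigma_a_eq_two
  have hσc := h.sigma_c
  have hσd := h.sigma_d
  have q1 := h.hdc.ne
  have q5 := (h.hcb.trans h.hba).ne
  have q6 := (h.hdc.trans (h.hcb.trans h.hba)).ne
  refine ⟨?_, ?_⟩
  · by_contra hlt
    rcases Nat.even_or_odd' ρ with ⟨u, hu | hu⟩
    · obtain ⟨R, hR, hjR, hs⟩ := h.exists_sum hj hG (t := u - 1) (by omega) hq
      exact h.no_relation (X := {a}) (by simp) hR hj hjR (by rw [sum_singleton, hs]; omega)
    · obtain ⟨R, hR, hjR, hs⟩ := h.exists_sum hj hG (t := u) (by omega) hq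
      exact h.no_relation (X := {d}) (by simp) hR hj hjR (by rw [sum_singleton, hs]; omega)
  · intro he
    obtain ⟨R, hR, hjR, hs⟩ := h.exists_sum hj hG (t := (Ioo b a).card) le_rfl hq
    exact h.no_relation (X := {a, c, d}) (by simp) hR hj hjR (by
      rw [sum_insert (by simp [q5.symm, q6.symm]), sum_pair q1.symm, hs]; omega)

/-- The test-vector condition at `(r + 1) K + 2`, where `r` is the number of entries between `a`
and `j`, `s` the number of those between `b` and `a`, and `K = 2 s + 3`: if `σ_j` were larger, no
entry from `σ_j` on could contribute, and the remaining sums reach at most `2 s + r K + 4`. -/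
lemma sigma_le (h : Setup σ a b c d θ) {j : Fin N} (hj : a < j)
    (hG : ∀ i ∈ Ioo a j, σ i = 2 * ((Ioo b a).card : ℤ) + 3) :
    σ j ≤ (2 * ((Ioo b a).card : ℤ) + 3) * ((Ioo a j).card + 1) + 2 := by
  by_contra hlt
  have hσa := h.sigma_a_eq_two
  have hσb := h.sigma_b
  have hσc := h.sigma_c
  have hσd := h.sigma_d
  set K : ℤ := 2 * ((Ioo b a).card : ℤ) + 3 with hK
  have hd : Disjoint (Ioo b a) (Ioo a j) := disjoint_left.mpr fun i h1 h2 =>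
    (mem_Ioo.mp h1).2.asymm (mem_Ioo.mp h2).1
  have hPG : ∑ i ∈ Ioo b a ∪ Ioo a j, σ i = 2 * ((Ioo b a).card : ℤ) + K * (Ioo a j).card := by
    rw [sum_union hd, sum_congr rfl fun i hi => h.sigma_between hi,
      sum_congr rfl fun i hi => hG i hi]
    simp; ring
  have hnn : 0 ≤ K * (Ioo a j).card := mul_nonneg (by omega) (by omega)
  have hj1 : σ j ≤ ∑ i ∈ rest a b c d, σ i :=
    single_le_sum (f := σ) (fun i _ => by linarith [h.pos i]) (h.mem_rest_of_a_lt hj)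
  rw [mul_add, mul_one] at hlt
  obtain ⟨S, hS, r, hr, hr'⟩ := h.test (K * (Ioo a j).card + K + 2) (by omega) (by omega)
  have hsub : S ⊆ Ioo b a ∪ Ioo a j := by
    intro i hi
    have h1 := h.b_lt_of_mem_rest (hS hi)
    have h2 := single_le_sum (f := σ) (fun i _ => by linarith [h.pos i]) hi
    have h3 : i < j := by
      by_contra hle
      have := h.mono _ _ (not_lt.mp hle)
      omega
    rcases lt_trichotomy i a with h4 | h4 | h4
    · simp [h1, h4]
    · exact absurd h4 (mem_rest.mp (hS hi)).1
    · simp [h3, h4]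
  have := sum_le_sum_of_subset_of_nonneg hsub (f := σ) fun i _ _ => by linarith [h.pos i]
  omega

/-- At the extreme value in `sigma_le`, `σ_j = σ_d + 2 σ_a + ∑_R σ_i`, where `R` consists of the
indices strictly between `b` and `j` other than `a`. The vector `e_d + 2 e_a + ∑_R e_i - e_j` is
irreducible by `irr_double` and has pairing `-1` with `e_c + e_d - e_a`. -/
lemma sigma_ne_top (h : Setup σ a b c d θ) {j : Fin N} (hj : a < j)
    (hG : ∀ i ∈ Ioo a j, σ i = 2 * ((Ioo b a).card : ℤ) + 3) :
    σ j ≠ (2 * ((Ioo b a).card : ℤ) + 3) * ((Ioo a j).card + 1) + 2 := by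
  intro he
  have hσa := h.sigma_a_eq_two
  have hσb := h.sigma_b
  have hσc := h.sigma_c
  have hσd := h.sigma_d
  have q1 := h.hdc.ne
  have q2 := h.hcb.ne
  have q3 := h.hba.ne
  have q4 := (h.hdc.trans h.hcb).ne
  have q5 := (h.hcb.trans h.hba).ne
  have q6 := (h.hdc.trans (h.hcb.trans h.hba)).ne
  obtain ⟨j1, j2, j3, j4⟩ := mem_rest.mp (h.mem_rest_of_a_lt hj)
  set K : ℤ := 2 * ((Ioo b a).card : ℤ) + 3 with hK
  have hd : Disjoint (Ioo b a) (Ioo a j) := disjoint_left.mpr fun i h1 h2 =>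
    (mem_Ioo.mp h1).2.asymm (mem_Ioo.mp h2).1
  have hPG : ∑ i ∈ Ioo b a ∪ Ioo a j, σ i = 2 * ((Ioo b a).card : ℤ) + K * (Ioo a j).card := by
    rw [sum_union hd, sum_congr rfl fun i hi => h.sigma_between hi,
      sum_congr rfl fun i hi => hG i hi]
    simp; ring
  have hR : Ioo b a ∪ Ioo a j ⊆ rest a b c d := by
    intro i hi
    rcases mem_union.mp hi with hi | hi
    · exact h.mem_rest_of_b_lt (mem_Ioo.mp hi).1 (mem_Ioo.mp hi).2.ne
    · exact h.mem_rest_of_a_lt (mem_Ioo.mp hi).1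
  have hjR : j ∉ Ioo b a ∪ Ioo a j := by simp [hj.not_gt]
  obtain ⟨r1, r2, r3, r4⟩ := not_mem_of_sub hR
  have hmemR : ∀ i, b < i → i < j → i ≠ a → i ∈ Ioo b a ∪ Ioo a j := fun i h1 h2 h3 => by
    rcases lt_or_gt_of_ne h3 with h4 | h4
    · simp [h1, h4]
    · simp [h2, h4]
  set R := Ioo b a ∪ Ioo a j with hRdef
  have hjS : j ∉ insert d R := by simp [j4, hjR]
  have haS : a ∉ insert d R := by simp [q6.symm, r1]
  have hsum : ∑ i ∈ insert d R, σ i + 4 = σ j := by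
    rw [sum_insert r4, hPG, hσd, he, mul_add]; omega
  have hdot : ∀ f : Fin N → ℤ, (relVec (insert d R) j + Pi.single a 2) ⬝ᵥ f
      = ∑ i ∈ insert d R, f i - f j + 2 * f a := fun f => by
    rw [add_dotProduct, relVec_dot, single_dotProduct]
  have ho : OddIrr σ a b c d (relVec (insert d R) j + Pi.single a 2) := by
    refine ⟨by rw [hdot]; omega, ?_, ?_⟩
    · simp [relVec, r1, r2, r3, q1, q2, q3, q4, q5, q6, q1.symm, q2.symm, q3.symm,
        q4.symm, q5.symm, q6.symm, j1.symm, j2.symm, j3.symm, j4.symm]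
      try decide
    · refine irr_double h.pos hjS haS j1 hσa hsum fun i h1 h2 h3 => ?_
      rcases lt_or_ge b i with h4 | h4
      · right
        rcases lt_or_gt_of_ne h2 with h5 | h5
        · exact absurd (mem_insert_of_mem (hmemR i h4 h5 h3)) h1
        · have := h.mono _ _ h5.le
          omega
      · left
        have := h.mono _ _ h4
        omega
  have ho' : OddIrr σ a b c d (relVec {c, d} a) :=
    oddIrr_relVec h.pos (by simp [q5.symm, q6.symm]) (by rw [sum_pair q1.symm]; omega)
      (by simp [relVec, q1, q2, q3, q4, q5, q6, q1.symm, q2.symm, q3.symm, q4.symm,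
        q5.symm, q6.symm])
  have key := h.pairing _ _ ho' ho
  have e1 : relVec {c, d} a ⬝ᵥ (relVec (insert d R) j + Pi.single a 2) = -1 := by
    rw [relVec_dot, sum_pair q1.symm]
    simp [relVec, r1, r3, q1.symm, q5, q6, q6.symm, j1.symm, j3.symm, j4.symm]
  have e2 : (relVec (insert d R) j + (Pi.single a 2 : Fin N → ℤ)) ⬝ᵥ
      (relVec (insert d R) j + (Pi.single a 2 : Fin N → ℤ)) = (insert d R).card + 5 := by
    rw [dotProduct_add, add_dotProduct, relVec_dot_self hjS, hdot]
    have : ∑ i ∈ insert d R, (Pi.single a 2 : Fin N → ℤ) i = 0 :=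
      sum_eq_zero fun i hi => Pi.single_eq_of_ne (fun hh : i = a => haS (hh ▸ hi)) 2
    rw [this, single_dotProduct]
    simp [relVec, r1, q6.symm, j1.symm, j1]
    try ring
  rw [e1, e2, relVec_dot_self (by simp [q5.symm, q6.symm]), card_pair q1.symm] at key
  norm_num at key
  omega

/-- Put `P = Ioo b a`, `s = |P|` and `K = 2 s + 3`. The value `σ_j = (q + 1) K` is incompatible
with `σ_l = K` for some `a < l < j`: the vectors `e_b + e_c + e_d + ∑_P e_i + ∑_T e_i - e_j` with
`l ∈ T`, `|T| = q`, and `e_b + e_c + e_d + ∑_P e_i - e_l` have pairing `s + 2`, while their norms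
are at least `s + 4`. -/
lemma sigma_ne_mul (h : Setup σ a b c d θ) {j : Fin N} (hj : a < j)
    (hG : ∀ i ∈ Ioo a j, σ i = 2 * ((Ioo b a).card : ℤ) + 3) {q : ℕ} (hq1 : 1 ≤ q)
    (hq : q ≤ (Ioo a j).card) : σ j ≠ (2 * ((Ioo b a).card : ℤ) + 3) * (q + 1) := by
  intro he
  have hσb := h.sigma_b
  have hσc := h.sigma_c
  have hσd := h.sigma_d
  have q1 := h.hdc.ne
  have q2 := h.hcb.ne
  have q3 := h.hba.ne
  have q4 := (h.hdc.trans h.hcb).ne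
  have q5 := (h.hcb.trans h.hba).ne
  have q6 := (h.hdc.trans (h.hcb.trans h.hba)).ne
  obtain ⟨T, hT, hTc⟩ := exists_subset_card_eq hq
  obtain ⟨l, hl⟩ := card_pos.mp (by omega : 0 < T.card)
  have hal := (mem_Ioo.mp (hT hl)).1
  have hlj := (mem_Ioo.mp (hT hl)).2
  obtain ⟨j1, j2, j3, j4⟩ := mem_rest.mp (h.mem_rest_of_a_lt hj)
  obtain ⟨l1, l2, l3, l4⟩ := mem_rest.mp (h.mem_rest_of_a_lt hal)
  have hP : Ioo b a ⊆ rest a b c d := fun i hi =>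
    h.mem_rest_of_b_lt (mem_Ioo.mp hi).1 (mem_Ioo.mp hi).2.ne
  have hTr : T ⊆ rest a b c d := fun i hi => h.mem_rest_of_a_lt (mem_Ioo.mp (hT hi)).1
  obtain ⟨p1, p2, p3, p4⟩ := not_mem_of_sub hP
  obtain ⟨t1, t2, t3, t4⟩ := not_mem_of_sub hTr
  have hPT : Disjoint (Ioo b a) T := disjoint_left.mpr fun i h1 h2 =>
    (mem_Ioo.mp h1).2.asymm (mem_Ioo.mp (hT h2)).1
  have hjP : j ∉ Ioo b a := fun hh => (mem_Ioo.mp hh).2.asymm hj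
  have hlP : l ∉ Ioo b a := fun hh => (mem_Ioo.mp hh).2.asymm hal
  have hjT : j ∉ T := fun hh => lt_irrefl _ (mem_Ioo.mp (hT hh)).2
  have hsP : ∑ i ∈ Ioo b a, σ i = 2 * ((Ioo b a).card : ℤ) := by
    rw [sum_congr rfl fun i hi => h.sigma_between hi]; simp; ring
  have hsT : ∑ i ∈ T, σ i = (2 * ((Ioo b a).card : ℤ) + 3) * q := by
    rw [sum_congr rfl fun i hi => hG i (hT hi)]; simp [hTc]; ring
  set P := Ioo b a with hPdef
  set B := insert b (insert c (insert d P)) with hB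
  have n1 : c ∉ insert d P := by simp [q1.symm, p3]
  have n2 : b ∉ insert c (insert d P) := by simp [q2.symm, q4.symm, p2]
  have hsB : ∑ i ∈ B, σ i = 2 * (P.card : ℤ) + 3 := by
    rw [hB, sum_insert n2, sum_insert n1, sum_insert p4, hsP]; omega
  have hcB : B.card = P.card + 3 := by
    rw [hB, card_insert_of_notMem n2, card_insert_of_notMem n1, card_insert_of_notMem p4]
  have hBT : Disjoint B T := by simp [hB, t2, t3, t4, hPT]
  have hjB : j ∉ B := by simp [hB, j2, j3, j4, hjP]
  have hlB : l ∉ B := by simp [hB, l2, l3, l4, hlP]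
  have key := h.pairing_relVec (S := B ∪ T) (S' := B) (k := j) (k' := l)
    (by simp [hjB, hjT]) hlB hlj.ne' (by rw [sum_union hBT, hsB, hsT, he]; ring)
    (by rw [hsB, hG l (hT hl)])
    (by
      simp [relVec, hB, p1, p2, p3, p4, t1, t2, t3, t4, q1, q2, q3, q4, q5, q6, q1.symm, q2.symm,
        q3.symm, q4.symm, q5.symm, q6.symm, j1.symm, j2.symm, j3.symm, j4.symm]
      decide)
    (by
      simp [relVec, hB, p1, p2, p3, p4, q1, q2, q3, q4, q5, q6, q1.symm, q2.symm,
        q3.symm, q4.symm, q5.symm, q6.symm, l1.symm, l2.symm, l3.symm, l4.symm]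
      decide)
  rw [union_inter_cancel_left, if_pos (by simp [hl]), if_neg hjB, card_union_of_disjoint hBT,
    hcB, hTc, abs_of_nonneg (by push_cast; omega)] at key
  push_cast at key
  omega

lemma sigma_tail (h : Setup σ a b c d θ) (j : Fin N) (hj : a < j) :
    σ j = 2 * ((Ioo b a).card : ℤ) + 3 := by
  induction j using WellFoundedLT.induction with
  | ind j ih =>
  have hG : ∀ i ∈ Ioo a j, σ i = 2 * ((Ioo b a).card : ℤ) + 3 := fun i hi =>
    ih i (mem_Ioo.mp hi).2 (mem_Ioo.mp hi).1
  have hle := h.sigma_le hj hG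
  have hne := h.sigma_ne_top hj hG
  have h3 := h.three_le_of_a_lt hj
  have hmul := @sigma_ne_mul _ _ _ _ _ _ _ h j hj hG
  have hres := @residue _ _ _ _ _ _ _ h j _ hj hG
  set s := (Ioo b a).card
  set r := (Ioo a j).card
  obtain ⟨m, hm⟩ : ∃ m : ℕ, σ j = m := ⟨(σ j).toNat, by omega⟩
  rw [hm] at hle hne h3 hmul hres ⊢
  have hle' : m ≤ (2 * s + 3) * r + (2 * s + 3) + 2 := by
    rw [mul_add, mul_one] at hle; exact_mod_cast hle
  have hne' : m ≠ (2 * s + 3) * r + (2 * s + 3) + 2 := by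
    rw [mul_add, mul_one] at hne; exact_mod_cast hne
  have hmul' : ∀ q : ℕ, 1 ≤ q → q ≤ r → m ≠ (2 * s + 3) * (q + 1) := fun q h1 h2 => by
    exact_mod_cast hmul h1 h2
  have hres' : ∀ q ρ : ℕ, q ≤ r → m = (2 * s + 3) * q + ρ → 1 ≤ ρ →
      2 * s + 3 ≤ ρ ∧ ρ ≠ 2 * s + 4 := fun q ρ h1 h2 => hres h1 (by exact_mod_cast h2)
  clear hmul hres hle hne ih hG
  suffices hh : m = 2 * s + 3 by rw [hh]; push_cast; rfl
  rcases le_or_gt ((2 * s + 3) * r) m with hc | hc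
  · obtain ⟨ρ, rfl⟩ := Nat.exists_eq_add_of_le hc
    have h5 := hres' r ρ le_rfl rfl
    rcases Nat.eq_zero_or_pos ρ with h6 | h6
    · -- here `m = r K`
      rcases (by omega : r = 0 ∨ r = 1 ∨ 2 ≤ r) with h7 | h7 | h7
      · rw [h7, h6] at h3; simp at h3
      · rw [h7, h6]; ring
      · refine absurd ?_ (hmul' (r - 1) (by omega) (by omega))
        rw [h6, Nat.sub_add_cancel (by omega), add_zero]
    · have h7 := h5 h6
      have h8 : ρ = 2 * s + 3 := by omega
      -- here `m = (r + 1) K`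
      rcases Nat.eq_zero_or_pos r with h9 | h9
      · rw [h9, h8]; ring
      · exact absurd (by rw [h8]; ring) (hmul' r h9 le_rfl)
  · have h4 := Nat.div_add_mod m (2 * s + 3)
    have h5 : m / (2 * s + 3) < r := Nat.div_lt_of_lt_mul hc
    have h6 := Nat.mod_lt m (by omega : 2 * s + 3 > 0)
    have h7 := hres' (m / (2 * s + 3)) (m % (2 * s + 3)) h5.le h4.symm
    have h8 : m % (2 * s + 3) = 0 := by omega
    rw [h8, add_zero] at h4
    generalize m / (2 * s + 3) = q at h4 h5
    rcases (by omega : q = 0 ∨ q = 1 ∨ 2 ≤ q) with h9 | h9 | h9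
    · rw [h9] at h4; simp at h4; omega
    · rw [h9] at h4; omega
    · refine absurd ?_ (hmul' (q - 1) (by omega) (by omega))
      rw [Nat.sub_add_cancel (by omega), h4]

end Setup

/-- The values of test vectors, as sums over a subset of `rest` plus the contribution of the four
distinguished coordinates. -/
lemma exists_subset_of_test {N : ℕ} {σ χ : Fin N → ℤ} {a b c d : Fin N}
    (hdc : d < c) (hcb : c < b) (hba : b < a)
    (h01 : ∀ i, i ≠ a → i ≠ b → i ≠ c → i ≠ d → (χ i = 0 ∨ χ i = 1))
    (hχ : ((χ d = 1 ∨ χ d = -1) ∧ χ c = 0 ∧ χ b = 0 ∧ χ a = 1) ∨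
      (χ d = 0 ∧ (χ c = 1 ∨ χ c = -1) ∧ χ b = 0 ∧ χ a = 1) ∨
      (χ d = 0 ∧ χ c = 0 ∧ (χ b = 1 ∨ χ b = -1) ∧ χ a = 1) ∨
      (χ d = 0 ∧ χ c = 0 ∧ χ b = 0 ∧ χ a = 2) ∨
      (χ d = 0 ∧ χ c = 0 ∧ χ b = 0 ∧ χ a = 0)) {j : ℤ} (hj : ∑ i, χ i * σ i = j) :
    ∃ S ⊆ rest a b c d, ∃ r : ℤ, ∑ i ∈ S, σ i + r = j ∧
      (r = 0 ∨ r = σ a - σ b ∨ r = σ a - σ c ∨ r = σ a - σ d ∨ r = σ a + σ d ∨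
        r = σ a + σ c ∨ r = σ a + σ b ∨ r = 2 * σ a) := by
  refine ⟨(rest a b c d).filter fun i => χ i = 1, filter_subset _ _,
    χ a * σ a + χ b * σ b + χ c * σ c + χ d * σ d, ?_, ?_⟩
  · rw [← hj]
    have hsplit : ∀ i, χ i * σ i = (if i ∈ (rest a b c d).filter (fun i => χ i = 1) then σ i else 0)
        + ((if i = a then χ a * σ a else 0) + (if i = b then χ b * σ b else 0)
        + (if i = c then χ c * σ c else 0) + if i = d then χ d * σ d else 0) := by
      have q1 := hdc.ne
      have q2 := hcb.ne
      have q3 := hba.ne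
      have q4 := (hdc.trans hcb).ne
      have q5 := (hcb.trans hba).ne
      have q6 := (hdc.trans (hcb.trans hba)).ne
      intro i
      by_cases h1 : i = a
      · subst h1; simp [mem_rest, q3.symm, q5.symm, q6.symm]
      by_cases h2 : i = b
      · subst h2; simp [mem_rest, q3, q2.symm, q4.symm]
      by_cases h3 : i = c
      · subst h3; simp [mem_rest, q1.symm, q2, q5]
      by_cases h4 : i = d
      · subst h4; simp [mem_rest, q1, q4, q6]
      rcases h01 i h1 h2 h3 h4 with h5 | h5 <;> simp [mem_rest, h1, h2, h3, h4, h5]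
    rw [sum_congr rfl fun i _ => hsplit i, sum_add_distrib, sum_ite_mem, univ_inter]
    simp [sum_add_distrib]
  · rcases hχ with ⟨h1 | h1, h2, h3, h4⟩ | ⟨h1, h2 | h2, h3, h4⟩ | ⟨h1, h2, h3 | h3, h4⟩ |
      ⟨h1, h2, h3, h4⟩ | ⟨h1, h2, h3, h4⟩ <;> rw [h1, h2, h3, h4] <;> ring_nf <;> simp

end ChangemakerLinear

/-- under the strengthened changemaker condition, `d = 0`, `c = 1`,
`b = 2`, `a = s + 3`, and `σ = (1, 1, 1, 2^{[s]}, 2, (2s+3)^{[t]})` with `n = s + t + 2`. -/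
theorem changemaker_classification (n : ℕ) (hn : 2 ≤ n)
    (σ : Fin (n + 2) → ℤ) (hσ : IsChangemaker σ)
    (a b c d : Fin (n + 2)) (hdc : d < c) (hcb : c < b) (hba : b < a)
    (hmax : ∀ i j : Fin (n + 2), (i = a ∨ i = b ∨ i = c ∨ i = d) →
      ¬(j = a ∨ j = b ∨ j = c ∨ j = d) → σ i = σ j → j < i)
    (aG : Fin (n + 1) → ℤ) (haG : ∀ i, 2 ≤ aG i)
    (e : sigmaPerp σ ≃+ (Fin (n + 1) → ℤ))
    (hiso : ∀ v w : sigmaPerp σ,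
      (∑ i, (v : Fin (n + 2) → ℤ) i * (w : Fin (n + 2) → ℤ) i)
        = linPair aG (e v) (e w))
    (hx0 : ∀ v : sigmaPerp σ,
      Int.ModEq 2
        ((v : Fin (n + 2) → ℤ) a + (v : Fin (n + 2) → ℤ) b
          + (v : Fin (n + 2) → ℤ) c + (v : Fin (n + 2) → ℤ) d)
        (e v 0))
    (θ : ℤ) (hθ : θ = 1 ∨ θ = -1)
    (hσa : σ a = σ b + σ c + σ d + θ)
    (hT : ∀ j : ℤ, 0 ≤ j →
      j ≤ 2 * σ a + ∑ i ∈ Finset.univ.filter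
        (fun i => i ≠ a ∧ i ≠ b ∧ i ≠ c ∧ i ≠ d), σ i →
      ∃ χ : Fin (n + 2) → ℤ, memT1 a b c d χ ∧ (∑ i, χ i * σ i) = j) :
    ∃ s t : ℕ, n = s + t + 2 ∧ d = 0 ∧ (c : ℕ) = 1 ∧ (b : ℕ) = 2 ∧ (a : ℕ) = s + 3 ∧
      (∀ i : Fin (n + 2), (i : ℕ) ≤ 2 → σ i = 1) ∧
      (∀ i : Fin (n + 2), 3 ≤ (i : ℕ) → (i : ℕ) ≤ s + 3 → σ i = 2) ∧
      (∀ i : Fin (n + 2), s + 4 ≤ (i : ℕ) → σ i = 2 * (s : ℤ) + 3) := by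
  have hpos : ∀ i, 1 ≤ σ i := fun i => by
    have h1 := hσ.1 i
    have h2 := ChangemakerLinear.sigma_ne_zero haG e hiso i
    omega
  have h : ChangemakerLinear.Setup σ a b c d θ := {
    pos := hpos
    mono := hσ.2.1
    hdc := hdc
    hcb := hcb
    hba := hba
    hmax := fun i j hi hj => hmax i j hi (by have := ChangemakerLinear.mem_rest.mp hj; tauto)
    pairing := fun v w hv hw => ChangemakerLinear.OddIrr.pairing haG e hiso hx0 hv hw
    hθ := hθ
    hσa := hσa
    test := fun j h0 hj => by
      obtain ⟨χ, ⟨h01, hχ⟩, hsum⟩ := hT j h0 hj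
      exact ChangemakerLinear.exists_subset_of_test hdc hcb hba h01 hχ hsum }
  have hsmall : ∀ i, i ≤ b → i = b ∨ i = c ∨ i = d := fun i hi => by
    by_contra hne
    push Not at hne
    exact (h.b_lt_of_mem_rest (ChangemakerLinear.mem_rest.mpr
      ⟨(hi.trans_lt hba).ne, hne⟩)).not_ge hi
  have hdc' : (d : ℕ) < c := hdc
  have hcb' : (c : ℕ) < b := hcb
  have hba' : (b : ℕ) < a := hba
  have hd : (d : ℕ) = 0 := by
    have := hsmall ⟨0, by omega⟩ (by simp [Fin.le_def])
    simp only [Fin.ext_iff] at this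
    omega
  have hc : (c : ℕ) = 1 := by
    have := hsmall ⟨1, by omega⟩ (by simp only [Fin.le_def]; omega)
    simp only [Fin.ext_iff] at this
    omega
  have hb : (b : ℕ) = 2 := by
    have := hsmall ⟨2, by omega⟩ (by simp only [Fin.le_def]; omega)
    simp only [Fin.ext_iff] at this
    omega
  have hs : (Finset.Ioo b a).card = (a : ℕ) - 3 := by rw [Fin.card_Ioo]; omega
  have ha := a.isLt
  refine ⟨(a : ℕ) - 3, n + 1 - a, by omega, Fin.ext hd, hc, hb, by omega, ?_, ?_, ?_⟩
  · intro i hi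
    have := h.mono i b (by simp only [Fin.le_def]; omega)
    have := hpos i
    have := h.sigma_b
    omega
  · intro i h3 hi
    rcases eq_or_ne i a with rfl | hne
    · exact h.sigma_a_eq_two
    · have := Fin.val_ne_of_ne hne
      exact h.sigma_between (by simp only [Finset.mem_Ioo, Fin.lt_def]; omega)
  · intro i hi
    rw [h.sigma_tail i (by simp only [Fin.lt_def]; omega), hs]
end

section
/- Let s ≥ 0 and t ≥ 1 be integers, let N = s + t + 4, and let σ = (1, 1, 1, 2^{[s]}, 2, (2s+3)^{[t]}) ∈ ℤ^N, i.e. σ_0 = σ_1 = σ_2 = 1, σ_i = 2 for 3 ≤ i ≤ s + 3, and σ_i = 2s + 3 for s + 4 ≤ i ≤ N − 1. Then the orthogonal complement σ^⊥ = {v ∈ ℤ^N : ⟨v,σ⟩ = 0}, equipped with the restricted inner product, is isometric to the linear lattice on N − 2 = s + t + 2 vertices whose sequence of diagonal Gram entries is (2^{[s]}, 3, 2, 2, s+3, 2^{[t−1]}), i.e. s copies of 2, then 3, 2, 2, s+3, then t−1 copies of 2. -/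
namespace SigmaPerp

/-! ### Extension by zero -/

/-- The extension by zero to `ℕ` of a vector indexed by `Fin n`. -/
def extendZero {n : ℕ} (x : Fin n → ℤ) (k : ℕ) : ℤ := if h : k < n then x ⟨k, h⟩ else 0

lemma extendZero_val {n : ℕ} (x : Fin n → ℤ) (i : Fin n) : extendZero x i = x i := by
  simp [extendZero]

lemma extendZero_of_le {n : ℕ} (x : Fin n → ℤ) {k : ℕ} (h : n ≤ k) : extendZero x k = 0 := by
  simp [extendZero, Nat.not_lt.mpr h]

lemma extendZero_add {n : ℕ} (x y : Fin n → ℤ) (k : ℕ) :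
    extendZero (x + y) k = extendZero x k + extendZero y k := by
  unfold extendZero
  split_ifs <;> simp

/-- The shift of `Y` by one place, with value `0` at `0`; this encodes the convention
`Y_{-1} = 0`. -/
def shift (Y : ℕ → ℤ) : ℕ → ℤ
  | 0 => 0
  | j + 1 => Y j

/-- The pairing of the linear lattice as a single sum. At the last vertex the two off-diagonal
terms vanish because of the extension by zero. -/
lemma linPair_eq_sum_range {m : ℕ} (A : ℕ → ℤ) (aG : Fin m → ℤ) (hA : ∀ i : Fin m, aG i = A i)
    (x y : Fin m → ℤ) :
    linPair aG x y = ∑ i ∈ Finset.range m,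
      (A i * (extendZero x i * extendZero y i) - extendZero x i * extendZero y (i + 1)
        - extendZero x (i + 1) * extendZero y i) := by
  set X := extendZero x with hX
  set Y := extendZero y with hY
  have h1 : linPair aG x y = ∑ i ∈ Finset.range m, ∑ j ∈ Finset.range m,
      ((if i = j then A i * (X i * Y i) else 0) - (if i + 1 = j then X i * Y (i + 1) else 0)
        - (if j + 1 = i then X (j + 1) * Y j else 0)) := by
    unfold linPair
    rw [Finset.sum_range]
    refine Finset.sum_congr rfl fun i _ => ?_
    rw [Finset.sum_range]
    refine Finset.sum_congr rfl fun j _ => ?_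
    rw [← extendZero_val x i, ← extendZero_val y j, hA, ← hX, ← hY]
    simp only [Fin.ext_iff]
    by_cases h : (i : ℕ) = j
    · rw [if_pos h, if_pos h, if_neg (by omega), if_neg (by omega), ← h]; ring
    · rw [if_neg h, if_neg h]
      by_cases h' : (i : ℕ) + 1 = j
      · rw [if_pos (Or.inl h'), if_pos h', if_neg (by omega), ← h']; ring
      · by_cases h'' : (j : ℕ) + 1 = i
        · rw [if_pos (Or.inr h''), if_neg h', if_pos h'', ← h'']; ring
        · rw [if_neg (by tauto), if_neg h', if_neg h'']; ring
  rw [h1]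
  simp only [Finset.sum_sub_distrib]
  congr 1
  · congr 1
    · refine Finset.sum_congr rfl fun i hi => ?_
      rw [Finset.sum_ite_eq, if_pos hi]
    · refine Finset.sum_congr rfl fun i hi => ?_
      rw [Finset.sum_ite_eq]
      split_ifs with h
      · rfl
      · rw [hY, extendZero_of_le y (by simpa using h), mul_zero]
  · rw [Finset.sum_comm]
    refine Finset.sum_congr rfl fun i hi => ?_
    rw [Finset.sum_ite_eq]
    split_ifs with h
    · rfl
    · rw [hX, extendZero_of_le x (by simpa using h), zero_mul]

/-! ### The vertex basis and its coordinates -/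

/-- The `k`-th coordinate of `∑ Y_i x_i`, for the vertex basis `x_i` of `σ^⊥`. -/
def vec (s : ℕ) (Y : ℕ → ℤ) : ℕ → ℤ
  | 0 => Y (s + 1)
  | 1 => Y (s + 2) - Y (s + 1) + Y s
  | 2 => Y (s + 3) - Y (s + 2) + Y s
  | k + 3 => if k ≤ s then Y (s + 3) + shift Y (s - k) - Y (s - k) else Y (k + 3) - Y (k + 2)

lemma vec_mid (s : ℕ) (Y : ℕ → ℤ) {j : ℕ} (hj : j ≤ s) :
    vec s Y (s + 3 - j) = Y (s + 3) + shift Y j - Y j := by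
  obtain ⟨k, rfl⟩ := Nat.exists_eq_add_of_le hj
  rw [show j + k + 3 - j = k + 3 by omega]
  simp [vec]

lemma vec_tail (s : ℕ) (Y : ℕ → ℤ) (j : ℕ) :
    vec s Y (s + 4 + j) = Y (s + 3 + (j + 1)) - Y (s + 3 + j) := by
  rw [show s + 4 + j = (s + 1 + j) + 3 by omega]
  simp only [vec]
  rw [if_neg (by omega)]
  congr 2 <;> omega

lemma vec_add (s : ℕ) (Y Z W : ℕ → ℤ) (h : ∀ k, W k = Y k + Z k) (k : ℕ) :
    vec s W k = vec s Y k + vec s Z k := by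
  have hs : ∀ j, shift W j = shift Y j + shift Z j := by
    rintro (_ | j) <;> simp [shift, h]
  rcases k with _ | _ | _ | k <;> simp only [vec, h, hs]
  · ring
  · ring
  · split_ifs <;> ring

/-- The coefficient of `x_i` in the expansion of a vector `V ∈ σ^⊥` in the vertex basis. -/
def coord (s t : ℕ) (V : ℕ → ℤ) (i : ℕ) : ℤ :=
  let T := -∑ j ∈ Finset.range t, V (s + 4 + j)
  let M := fun i : ℕ => ((i : ℤ) + 1) * T - ∑ j ∈ Finset.range (i + 1), V (s + 3 - j)
  if i ≤ s then M i
  else if i = s + 1 then V 0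
  else if i = s + 2 then V 0 + V 1 - M s
  else T + ∑ j ∈ Finset.range (i - (s + 3)), V (s + 4 + j)

/-- A sum over all coordinates, split along the blocks of `σ`; the block of `2`s is traversed
backwards, to match the order of the vertices. -/
lemma sum_blocks (s t : ℕ) (F : ℕ → ℤ) :
    ∑ k ∈ Finset.range (s + t + 4), F k = F 0 + F 1 + F 2 +
      ∑ j ∈ Finset.range (s + 1), F (s + 3 - j) + ∑ j ∈ Finset.range t, F (s + 4 + j) := by
  rw [show s + t + 4 = (3 + (s + 1)) + t by omega, Finset.sum_range_add, Finset.sum_range_add,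
    ← Finset.sum_range_reflect (fun k => F (3 + k))]
  congr 1
  · congr 1
    · simp [Finset.sum_range_succ]
    · refine Finset.sum_congr rfl fun j hj => ?_
      rw [Finset.mem_range] at hj
      congr 1
      omega
  · refine Finset.sum_congr rfl fun j _ => ?_
    congr 1
    omega

lemma sum_vec_mid (s n : ℕ) (hn : n ≤ s + 1) (Y : ℕ → ℤ) :
    ∑ j ∈ Finset.range n, vec s Y (s + 3 - j) = n * Y (s + 3) - shift Y n := by
  induction n with
  | zero => simp [shift]
  | succ n ih =>
    rw [Finset.sum_range_succ, ih (by omega), vec_mid s Y (by omega)]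
    simp only [shift]
    push_cast
    ring

lemma sum_vec_tail (s n : ℕ) (Y : ℕ → ℤ) :
    ∑ j ∈ Finset.range n, vec s Y (s + 4 + j) = Y (s + 3 + n) - Y (s + 3) := by
  simp only [vec_tail]
  exact Finset.sum_range_sub (fun j => Y (s + 3 + j)) n

/-- The coordinates of `σ`, as a function on `ℕ`. -/
def weight (s k : ℕ) : ℤ := if k ≤ 2 then 1 else if k ≤ s + 3 then 2 else 2 * (s : ℤ) + 3

lemma sum_mul_weight (s t : ℕ) (V : ℕ → ℤ) :
    ∑ k ∈ Finset.range (s + t + 4), V k * weight s k = V 0 + V 1 + V 2 +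
      2 * ∑ j ∈ Finset.range (s + 1), V (s + 3 - j) +
      (2 * (s : ℤ) + 3) * ∑ j ∈ Finset.range t, V (s + 4 + j) := by
  rw [sum_blocks]
  congr 1
  · congr 1
    · simp [weight]
    · rw [Finset.mul_sum]
      refine Finset.sum_congr rfl fun j hj => ?_
      rw [Finset.mem_range] at hj
      rw [weight, if_neg (by omega), if_pos (by omega), mul_comm]
  · rw [Finset.mul_sum]
    refine Finset.sum_congr rfl fun j _ => ?_
    rw [weight, if_neg (by omega), if_neg (by omega), mul_comm]

lemma sum_vec_mul_weight (s t : ℕ) (Y : ℕ → ℤ) (hY : Y (s + 3 + t) = 0) :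
    ∑ k ∈ Finset.range (s + t + 4), vec s Y k * weight s k = 0 := by
  rw [sum_mul_weight, sum_vec_mid s _ le_rfl, sum_vec_tail, hY]
  simp only [vec, shift]
  push_cast
  ring

lemma coord_vec (s t : ℕ) (Y : ℕ → ℤ) (hY : Y (s + 3 + t) = 0) (i : ℕ) :
    coord s t (vec s Y) i = Y i := by
  simp only [coord]
  rw [sum_vec_tail, hY]
  split_ifs with h1 h2 h3
  · rw [sum_vec_mid s _ (by omega)]
    simp only [shift]
    push_cast
    ring
  · rw [h2, vec]
  · rw [h3, sum_vec_mid s _ le_rfl]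
    simp only [shift, vec]
    push_cast
    ring
  · rw [sum_vec_tail, show s + 3 + (i - (s + 3)) = i by omega]
    ring

lemma vec_coord (s t : ℕ) (V : ℕ → ℤ)
    (hV : ∑ k ∈ Finset.range (s + t + 4), V k * weight s k = 0) (k : ℕ) :
    vec s (coord s t V) k = V k := by
  rw [sum_mul_weight] at hV
  have hT : coord s t V (s + 3) = -∑ j ∈ Finset.range t, V (s + 4 + j) := by
    simp [coord]
  have hmid : ∀ i, i ≤ s → coord s t V i = ((i : ℤ) + 1) * coord s t V (s + 3) -
      ∑ j ∈ Finset.range (i + 1), V (s + 3 - j) := by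
    intro i hi
    rw [hT, coord, if_pos hi]
  have h1 : coord s t V (s + 1) = V 0 := by simp [coord]
  have h2 : coord s t V (s + 2) = V 0 + V 1 - coord s t V s := by simp [coord]
  rcases k with _ | _ | _ | k
  · exact h1
  · simp only [vec, zero_add, h1, h2]; ring
  · -- the coordinate `V_2` is determined by orthogonality to `σ`
    simp only [vec, zero_add, Nat.reduceAdd, h2]
    rw [hmid s le_rfl, hT]
    linarith
  · rcases le_or_gt k s with hk | hk
    · obtain ⟨j, rfl⟩ := Nat.exists_eq_add_of_le hk
      rw [show k + 3 = k + j + 3 - j by omega, vec_mid _ _ (by omega), hmid j (by omega),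
        Finset.sum_range_succ]
      rcases j with _ | j
      · simp [shift]
      · simp only [shift]
        rw [hmid j (by omega)]
        push_cast
        ring
    · obtain ⟨j, rfl⟩ := Nat.exists_eq_add_of_lt hk
      have htail : ∀ n, coord s t V (s + 3 + n) =
          coord s t V (s + 3) + ∑ j ∈ Finset.range n, V (s + 4 + j) := by
        intro n
        rw [hT, coord, if_neg (by omega), if_neg (by omega), if_neg (by omega)]
        simp
      rw [show s + j + 1 + 3 = s + 4 + j by omega, vec_tail, htail, htail, Finset.sum_range_succ]
      ring

/-- `coord` of an extension by zero vanishes past the last vertex: there the two partial sums over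
the last block of `σ` cancel. -/
lemma coord_extendZero_of_le (s t : ℕ) (v : Fin (s + t + 4) → ℤ) {k : ℕ} (hk : s + t + 3 ≤ k) :
    coord s t (extendZero v) k = 0 := by
  obtain ⟨n, rfl⟩ := Nat.exists_eq_add_of_le hk
  rw [coord]
  rw [if_neg (by omega), if_neg (by omega), if_neg (by omega),
    show s + t + 3 + n - (s + 3) = t + n by omega, Finset.sum_range_add]
  have h0 : ∑ j ∈ Finset.range n, extendZero v (s + 4 + (t + j)) = 0 :=
    Finset.sum_eq_zero fun j _ => extendZero_of_le v (by omega)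
  rw [h0]
  ring

/-! ### The Gram matrix -/

/-- The pairing on the block of `2`s, compared with the pairing of a chain of vertices of
norm `2`. -/
lemma sum_mid_mul_mid (T T' : ℤ) (Y Z : ℕ → ℤ) (n : ℕ) :
    ∑ j ∈ Finset.range n, (T + shift Y j - Y j) * (T' + shift Z j - Z j) =
      n * (T * T') - T * shift Z n - T' * shift Y n +
      ∑ j ∈ Finset.range n, (2 * (Y j * Z j) - Y j * Z (j + 1) - Y (j + 1) * Z j) -
      shift Y n * shift Z n + shift Y n * Z n + Y n * shift Z n := by
  induction n with
  | zero => simp [shift]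
  | succ n ih =>
    rw [Finset.sum_range_succ, Finset.sum_range_succ, ih]
    simp only [shift]
    push_cast
    ring

/-- The pairing on the last block, compared with the pairing of a chain of vertices of
norm `2`. -/
lemma sum_tail_mul_tail (Y Z : ℕ → ℤ) (n : ℕ) :
    ∑ j ∈ Finset.range n, (Y (j + 1) - Y j) * (Z (j + 1) - Z j) =
      ∑ j ∈ Finset.range n, (2 * (Y j * Z j) - Y j * Z (j + 1) - Y (j + 1) * Z j) -
      Y 0 * Z 0 + Y n * Z n := by
  induction n with
  | zero => simp
  | succ n ih =>
    rw [Finset.sum_range_succ, Finset.sum_range_succ, ih]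
    ring

/-- The diagonal Gram entries, written as the deviation from a chain of vertices of norm `2`. -/
def diag (s i : ℕ) : ℤ := 2 + (if i = s then 1 else 0) + (if i = s + 3 then (s : ℤ) + 1 else 0)

lemma sum_vec_mul_vec (s t : ℕ) (ht : 1 ≤ t) (Y Z : ℕ → ℤ) (hY : Y (s + 3 + t) = 0) :
    ∑ k ∈ Finset.range (s + t + 4), vec s Y k * vec s Z k =
      ∑ i ∈ Finset.range (s + t + 3),
        (diag s i * (Y i * Z i) - Y i * Z (i + 1) - Y (i + 1) * Z i) := by
  have hdiag : ∑ i ∈ Finset.range (s + t + 3),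
        (diag s i * (Y i * Z i) - Y i * Z (i + 1) - Y (i + 1) * Z i) =
      ∑ i ∈ Finset.range (s + t + 3), (2 * (Y i * Z i) - Y i * Z (i + 1) - Y (i + 1) * Z i) +
        Y s * Z s + ((s : ℤ) + 1) * (Y (s + 3) * Z (s + 3)) := by
    have h : ∀ i, diag s i * (Y i * Z i) - Y i * Z (i + 1) - Y (i + 1) * Z i =
        (2 * (Y i * Z i) - Y i * Z (i + 1) - Y (i + 1) * Z i) +
        (if i = s then Y i * Z i else 0) +
        (if i = s + 3 then ((s : ℤ) + 1) * (Y i * Z i) else 0) := by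
      intro i
      unfold diag
      split_ifs <;> ring
    simp only [h]
    rw [Finset.sum_add_distrib, Finset.sum_add_distrib, Finset.sum_ite_eq', Finset.sum_ite_eq',
      if_pos (Finset.mem_range.mpr (by omega)), if_pos (Finset.mem_range.mpr (by omega))]
  have hmid : ∑ j ∈ Finset.range (s + 1), vec s Y (s + 3 - j) * vec s Z (s + 3 - j) =
      ∑ j ∈ Finset.range (s + 1),
        (Y (s + 3) + shift Y j - Y j) * (Z (s + 3) + shift Z j - Z j) := by
    refine Finset.sum_congr rfl fun j hj => ?_
    rw [Finset.mem_range] at hj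
    rw [vec_mid s Y (by omega), vec_mid s Z (by omega)]
  have htail := sum_tail_mul_tail (fun j => Y (s + 3 + j)) (fun j => Z (s + 3 + j)) t
  rw [hdiag, sum_blocks, hmid, sum_mid_mul_mid, show s + t + 3 = (s + 1 + 2) + t by omega,
    Finset.sum_range_add _ (s + 1 + 2) t, Finset.sum_range_succ _ (s + 1 + 1),
    Finset.sum_range_succ _ (s + 1)]
  simp only [vec_tail]
  simp only [hY] at htail
  rw [htail]
  simp only [vec, shift, add_zero, add_assoc, Nat.reduceAdd]
  push_cast
  ring

end SigmaPerp

/-- for `σ = (1, 1, 1, 2^{[s]}, 2, (2s+3)^{[t]}) ∈ ℤᴺ`, `N = s + t + 4`,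
`t ≥ 1`, the orthogonal complement `σ^⊥` with the restricted standard inner product is
isometric to the linear lattice whose sequence of diagonal Gram entries is
`(2^{[s]}, 3, 2, 2, s+3, 2^{[t−1]})`. -/
theorem sigmaPerp_isometric_linear_lattice (s t : ℕ) (ht : 1 ≤ t)
    (N : ℕ) (hN : N = s + t + 4)
    (σ : Fin N → ℤ)
    (hσ : ∀ i : Fin N, σ i =
      if (i : ℕ) ≤ 2 then 1 else if (i : ℕ) ≤ s + 3 then 2 else 2 * (s : ℤ) + 3)
    (aG : Fin (s + t + 3) → ℤ)
    (haG : ∀ i : Fin (s + t + 3), aG i =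
      if (i : ℕ) < s then 2 else if (i : ℕ) = s then 3
      else if (i : ℕ) = s + 3 then (s : ℤ) + 3 else 2) :
    ∃ e : sigmaPerp σ ≃+ (Fin (s + t + 3) → ℤ),
      ∀ v w : sigmaPerp σ,
        (∑ i, (v : Fin N → ℤ) i * (w : Fin N → ℤ) i) = linPair aG (e v) (e w) := by
  subst hN
  have hσ' : ∀ i, σ i = SigmaPerp.weight s i := hσ
  have hdiag : ∀ i, aG i = SigmaPerp.diag s i := by
    intro i
    rw [haG, SigmaPerp.diag]
    split_ifs <;> omega
  have hmem : ∀ v : Fin (s + t + 4) → ℤ, v ∈ sigmaPerp σ ↔ ∑ i, v i * σ i = 0 := fun _ => Iff.rfl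
  have hzero : ∀ y : Fin (s + t + 3) → ℤ, SigmaPerp.extendZero y (s + 3 + t) = 0 :=
    fun y => SigmaPerp.extendZero_of_le y (by omega)
  -- outside its range, `vec` of an extension by zero is zero, so restricting loses nothing
  have hvec : ∀ (y : Fin (s + t + 3) → ℤ) (k : ℕ),
      SigmaPerp.extendZero
        (fun i : Fin (s + t + 4) => SigmaPerp.vec s (SigmaPerp.extendZero y) i) k =
      SigmaPerp.vec s (SigmaPerp.extendZero y) k := by
    intro y k
    rcases lt_or_ge k (s + t + 4) with hk | hk
    · simp [SigmaPerp.extendZero, hk]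
    · obtain ⟨j, rfl⟩ := Nat.exists_eq_add_of_le hk
      rw [SigmaPerp.extendZero_of_le _ hk, show s + t + 4 + j = s + 4 + (t + j) by omega,
        SigmaPerp.vec_tail, SigmaPerp.extendZero_of_le y (by omega),
        SigmaPerp.extendZero_of_le y (by omega), sub_zero]
  let f : (Fin (s + t + 3) → ℤ) ≃+ sigmaPerp σ :=
    { toFun := fun y => ⟨fun i => SigmaPerp.vec s (SigmaPerp.extendZero y) i, by
        rw [hmem]
        simp only [hσ']
        rw [← Finset.sum_range
          (fun k => SigmaPerp.vec s (SigmaPerp.extendZero y) k * SigmaPerp.weight s k)]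
        exact SigmaPerp.sum_vec_mul_weight s t _ (hzero y)⟩
      invFun := fun v i => SigmaPerp.coord s t (SigmaPerp.extendZero v.1) i
      left_inv := by
        intro y
        funext i
        dsimp only
        rw [funext (hvec y), SigmaPerp.coord_vec s t _ (hzero y), SigmaPerp.extendZero_val]
      right_inv := by
        rintro ⟨v, hv⟩
        apply Subtype.ext
        funext i
        dsimp only
        have hV : ∑ k ∈ Finset.range (s + t + 4),
            SigmaPerp.extendZero v k * SigmaPerp.weight s k = 0 := by
          rw [Finset.sum_range]
          simp only [SigmaPerp.extendZero_val, ← hσ']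
          exact hv
        have hc : SigmaPerp.extendZero (fun i : Fin (s + t + 3) =>
            SigmaPerp.coord s t (SigmaPerp.extendZero v) i) =
            SigmaPerp.coord s t (SigmaPerp.extendZero v) := by
          funext k
          rcases lt_or_ge k (s + t + 3) with hk | hk
          · simp [SigmaPerp.extendZero, hk]
          · rw [SigmaPerp.extendZero_of_le _ hk]
            exact (SigmaPerp.coord_extendZero_of_le s t v hk).symm
        rw [hc, SigmaPerp.vec_coord s t _ hV, SigmaPerp.extendZero_val]
      map_add' := by
        intro y z
        apply Subtype.ext
        funext i
        exact SigmaPerp.vec_add s _ _ _ (SigmaPerp.extendZero_add y z) i }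
  refine ⟨f.symm, fun v w => ?_⟩
  obtain ⟨y, rfl⟩ := f.surjective v
  obtain ⟨z, rfl⟩ := f.surjective w
  rw [f.symm_apply_apply, f.symm_apply_apply, SigmaPerp.linPair_eq_sum_range _ aG hdiag,
    ← SigmaPerp.sum_vec_mul_vec s t ht _ _ (hzero y), Finset.sum_range]
  rfl
end
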